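/- arXiv:1607.01342 — 4 statements merged into one kernel-verified Lean document; each statement's English description precedes it below -/
import Mathlib

section
/- Let W₁, V₁ ∈ ℂ[x₁,…,x_m] and W₂, V₂ ∈ ℂ[y₁,…,y_k] be admissible polynomials (the x-variables disjoint from the y-variables), let G₁ be a group of common diagonal symmetries of W₁ and V₁, and G₂ a group of common diagonal symmetries of W₂ and V₂. Suppose φ₁ : Q_{W₁} → Q_{V₁} and φ₂ : Q_{W₂} → Q_{V₂} are G₁-equivariant (resp. G₂-equivariant) ℂ-algebra isomorphisms preserving the weighted grading and the pairings. Then there exists a (G₁ × G₂)-equivariant ℂ-algebra isomorphism φ : Q_{W₁+W₂} → Q_{V₁+V₂} preserving the weighted grading and the pairings, satisfying φ(ι₁(a)·ι₂(b)) = ι₁′(φ₁(a))·ι₂′(φ₂(b)) for all a ∈ Q_{W₁}, b ∈ Q_{W₂}, where ι₁, ι₂ (resp. ι₁′, ι₂′) are the algebra maps Q_{W₁}, Q_{W₂} → Q_{W₁+W₂} (resp. into Q_{V₁+V₂}) induced by inclusion of variables. -/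
open MvPolynomial
open scoped TensorProduct

noncomputable section

namespace LG

variable {σ : Type*} [Fintype σ] [DecidableEq σ]

/-- The Jacobian ideal of a polynomial `W`, generated by its partial derivatives. -/
def jacobianIdeal (W : MvPolynomial σ ℂ) : Ideal (MvPolynomial σ ℂ) :=
  Ideal.span (Set.range fun i => pderiv i W)

/-- The Milnor ring (local algebra) `Q_W = ℂ[x]/(∂W/∂x₁,…,∂W/∂xₙ)`. -/
abbrev MilnorRing (W : MvPolynomial σ ℂ) :=
  MvPolynomial σ ℂ ⧸ jacobianIdeal W

/-- The canonical projection onto the Milnor ring. -/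
def mkQ (W : MvPolynomial σ ℂ) : MvPolynomial σ ℂ →ₐ[ℂ] MilnorRing W :=
  Ideal.Quotient.mkₐ ℂ (jacobianIdeal W)

/-- `W` is quasihomogeneous with (positive rational) weights `q`:
every monomial `x^a` occurring in `W` satisfies `∑ i, a i * q i = 1`. -/
def IsQuasiHomogeneous (W : MvPolynomial σ ℂ) (q : σ → ℚ) : Prop :=
  (∀ i, 0 < q i) ∧ ∀ a ∈ W.support, ∑ i, (a i : ℚ) * q i = 1

/-- `W` is nondegenerate: the origin is the only common zero of its partial
derivatives. -/
def Nondegenerate (W : MvPolynomial σ ℂ) : Prop :=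
  ∀ x : σ → ℂ, (∀ i, eval x (pderiv i W) = 0) → x = 0

/-- `W` is admissible with weights `q`: nondegenerate, quasihomogeneous with
uniquely determined weights, and without cross-term monomials `xᵢxⱼ` (`i ≠ j`). -/
def Admissible (W : MvPolynomial σ ℂ) (q : σ → ℚ) : Prop :=
  Nondegenerate W ∧ IsQuasiHomogeneous W q ∧
    (∀ q', IsQuasiHomogeneous W q' → q' = q) ∧
    ∀ a ∈ W.support, ∀ i j, i ≠ j → a ≠ Finsupp.single i 1 + Finsupp.single j 1

/-- The Hessian of `W`: the determinant of the matrix of second partial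
derivatives. -/
def hess (W : MvPolynomial σ ℂ) : MvPolynomial σ ℂ :=
  Matrix.det (Matrix.of fun i j => pderiv i (pderiv j W))

/-- The homogeneous component of the Milnor ring of weighted degree `d`:
the image in `Q_W` of the span of the monomials of weighted degree `d`. -/
def gradedPiece (W : MvPolynomial σ ℂ) (q : σ → ℚ) (d : ℚ) :
    Submodule ℂ (MilnorRing W) :=
  (weightedHomogeneousSubmodule ℂ q d).map (mkQ W).toLinearMap

/-- The top weighted degree `∑ᵢ (1 - 2qᵢ)` of the Milnor ring. -/
def topDegree (q : σ → ℚ) : ℚ := ∑ i, (1 - 2 * q i)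

/-- The part of the Milnor ring of weighted degree below the top degree. -/
def belowTop (W : MvPolynomial σ ℂ) (q : σ → ℚ) : Submodule ℂ (MilnorRing W) :=
  ⨆ (d : ℚ) (_ : d < topDegree q), gradedPiece W q d

/-- `p` is the pairing of the Milnor ring of `W`: the top weighted-degree
homogeneous component of `a * b` equals `(p a b / μ) • [Hess W]`, i.e.
`a * b - (p a b / μ) • [Hess W]` lies in the part of degree `< topDegree q`. -/
def IsMilnorPairing (W : MvPolynomial σ ℂ) (q : σ → ℚ)
    (p : MilnorRing W → MilnorRing W → ℂ) : Prop :=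
  ∀ a b : MilnorRing W,
    a * b - (p a b / (Module.finrank ℂ (MilnorRing W) : ℂ)) • mkQ W (hess W)
      ∈ belowTop W q

/-- The rescaling substitution `xᵢ ↦ ζᵢ · xᵢ`. -/
def scaleVars (ζ : σ → ℂ) : MvPolynomial σ ℂ →ₐ[ℂ] MvPolynomial σ ℂ :=
  aeval fun i => C (ζ i) * X i

/-- `φ : Q_W → Q_V` is equivariant for the diagonal symmetry `ζ`, expressed on
representatives: the action of `ζ` sends the class of `p` to
`det ζ • [p ∘ ζ]`, and `φ` intertwines the two actions. -/
def EquivariantAt (W V : MvPolynomial σ ℂ)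
    (φ : MilnorRing W → MilnorRing V) (ζ : σ → ℂ) : Prop :=
  ∀ p r : MvPolynomial σ ℂ, φ (mkQ W p) = mkQ V r →
    φ ((∏ i, ζ i) • mkQ W (scaleVars ζ p)) = (∏ i, ζ i) • mkQ V (scaleVars ζ r)

/-- `φ : Q_W → Q_V` preserves the weighted grading. -/
def PreservesGrading {σ τ : Type*} [Fintype σ] [DecidableEq σ]
    [Fintype τ] [DecidableEq τ]
    {W : MvPolynomial σ ℂ} {V : MvPolynomial τ ℂ}
    (φ : MilnorRing W → MilnorRing V) (qW : σ → ℚ) (qV : τ → ℚ) : Prop :=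
  ∀ d : ℚ, ∀ a ∈ gradedPiece W qW d, φ a ∈ gradedPiece V qV d

/-- `φ : Q_W → Q_V` preserves the pairings: `⟨a,b⟩_{Q_W} = ⟨φ a, φ b⟩_{Q_V}`. -/
def PreservesPairings {σ τ : Type*} [Fintype σ] [DecidableEq σ]
    [Fintype τ] [DecidableEq τ]
    {W : MvPolynomial σ ℂ} {V : MvPolynomial τ ℂ}
    (φ : MilnorRing W → MilnorRing V) (qW : σ → ℚ) (qV : τ → ℚ) : Prop :=
  ∀ pW pV, IsMilnorPairing W qW pW → IsMilnorPairing V qV pV →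
    ∀ a b, pW a b = pV (φ a) (φ b)

end LG

open LG

/-- The sum `W₁ + W₂` of two polynomials in disjoint sets of variables,
regarded as a polynomial in all the variables. -/
def sumPoly {m k : ℕ} (W₁ : MvPolynomial (Fin m) ℂ) (W₂ : MvPolynomial (Fin k) ℂ) :
    MvPolynomial (Fin m ⊕ Fin k) ℂ :=
  rename Sum.inl W₁ + rename Sum.inr W₂

namespace LG

section Alg
set_option linter.unusedSectionVars false
variable {σ : Type*} [Fintype σ] [DecidableEq σ]

lemma X_mul_mem_powSpan (N : ℕ) (i : σ) (s : Set σ) (hi : i ∉ s) (p : MvPolynomial σ ℂ)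
    (h : X i * p ∈ Ideal.span ((fun k => (X k : MvPolynomial σ ℂ) ^ N) '' s)) :
    p ∈ Ideal.span ((fun k => (X k : MvPolynomial σ ℂ) ^ N) '' s) := by
  have e : ((fun k => (X k : MvPolynomial σ ℂ) ^ N) '' s) =
      (fun s => monomial s (1 : ℂ)) '' ((fun k => Finsupp.single k N) '' s) := by
    rw [Set.image_image]
    simp [X_pow_eq_monomial]
  rw [e, mem_ideal_span_monomial_image] at h ⊢
  intro a ha
  obtain ⟨_, ⟨k, hk, rfl⟩, hle⟩ := h (Finsupp.single i 1 + a) (by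
    rw [mem_support_iff, coeff_X_mul]; exact mem_support_iff.1 ha)
  refine ⟨_, ⟨k, hk, rfl⟩, ?_⟩
  have hki : i ≠ k := fun h => hi (h ▸ hk)
  have := hle k
  simp only [Finsupp.single_eq_same, Finsupp.add_apply, Finsupp.single_apply, hki, if_false,
    zero_add] at this
  simpa [Finsupp.single_le_iff] using this

lemma prod_notMem_powSpan (N : ℕ) :
    (∏ i, (X i : MvPolynomial σ ℂ) ^ N) ∉
      Ideal.span (Set.range (fun k => (X k : MvPolynomial σ ℂ) ^ (N + 1))) := by
  have e : Set.range (fun k => (X k : MvPolynomial σ ℂ) ^ (N+1)) =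
      (fun s => monomial s (1 : ℂ)) '' (Set.range (fun k => Finsupp.single k (N+1))) := by
    rw [← Set.range_comp]
    congr 1; funext k; simp [X_pow_eq_monomial]
  have e2 : (∏ i, (X i : MvPolynomial σ ℂ) ^ N) =
      monomial (∑ i, Finsupp.single i N) 1 := by
    rw [monomial_sum_one]; simp [X_pow_eq_monomial]
  rw [e, mem_ideal_span_monomial_image, e2]
  intro h
  obtain ⟨_, ⟨k, rfl⟩, hle⟩ := h (∑ i, Finsupp.single i N) (by
    rw [mem_support_iff, coeff_monomial]; simp)
  have := hle k
  simp [Finsupp.single_apply, Finsupp.finsetSum_apply] at this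

/-- Cramer-type statement. -/
lemma det_mul_mem (M : Matrix σ σ (MvPolynomial σ ℂ)) (v : σ → MvPolynomial σ ℂ)
    (I : Ideal (MvPolynomial σ ℂ)) (h : ∀ i, (M.mulVec v) i ∈ I) (j : σ) :
    v j * M.det ∈ I := by
  have h1 : (M.adjugate.mulVec (M.mulVec v)) j = v j * M.det := by
    rw [Matrix.mulVec_mulVec, Matrix.adjugate_mul, Matrix.smul_mulVec, Matrix.one_mulVec]
    simp [mul_comm]
  rw [← h1]
  exact Ideal.sum_mem _ fun k _ => Ideal.mul_mem_left _ _ (h k)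

lemma det_sub_det_mem (N : ℕ) (A B : Matrix σ σ (MvPolynomial σ ℂ))
    (hA : ∀ i, (A.mulVec X) i = X i ^ N) (hB : ∀ i, (B.mulVec X) i = X i ^ N) :
    A.det - B.det ∈ Ideal.span (Set.range (fun k => (X k : MvPolynomial σ ℂ) ^ N)) := by
  set I := Ideal.span (Set.range (fun k => (X k : MvPolynomial σ ℂ) ^ N)) with hI
  let M : Finset σ → Matrix σ σ (MvPolynomial σ ℂ) := fun s i => if i ∈ s then A i else B i
  have hM : ∀ s i, ((M s).mulVec X) i = X i ^ N := by
    intro s i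
    by_cases h : i ∈ s
    · rw [← hA i]; simp [M, Matrix.mulVec, h]
    · rw [← hB i]; simp [M, Matrix.mulVec, h]
  have key : ∀ s : Finset σ, (M s).det - B.det ∈ I := by
    intro s
    induction s using Finset.induction_on with
    | empty => 
      have : M ∅ = B := by funext i; simp [M]
      rw [this]; simp
    | insert i s hi ih =>
      have h1 : M (insert i s) = (M s).updateRow i (A i) := by
        funext k
        by_cases hk : k = i
        · subst hk; rw [Matrix.updateRow_self]; simp [M]
        · rw [Matrix.updateRow_ne hk]; simp [M, hk]
      have h2 : M s = (M s).updateRow i (B i) := by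
        funext k
        by_cases hk : k = i
        · subst hk; rw [Matrix.updateRow_self]; simp [M, hi]
        · rw [Matrix.updateRow_ne hk]
      have h3 : (M (insert i s)).det = (M s).det + ((M s).updateRow i (A i - B i)).det := by
        conv_rhs => rw [h2]
        rw [Matrix.updateRow_idem, ← Matrix.det_updateRow_add, h1]
        congr 2; abel
      have h4 : ((M s).updateRow i (A i - B i)).det ∈
          Ideal.span ((fun k => (X k : MvPolynomial σ ℂ) ^ N) '' {k | k ≠ i}) := by
        apply X_mul_mem_powSpan N i _ (by simp)
        apply det_mul_mem _ X
        intro k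
        by_cases hk : k = i
        · subst hk
          have : (((M s).updateRow k (A k - B k)).mulVec X) k = 0 := by
            have ha := hA k; have hb := hB k
            simp only [Matrix.mulVec] at ha hb ⊢
            rw [Matrix.updateRow_self, sub_dotProduct, ha, hb, sub_self]
          rw [this]; exact Ideal.zero_mem _
        · have : (((M s).updateRow i (A i - B i)).mulVec X) k = X k ^ N := by
            rw [← hM s k]; simp only [Matrix.mulVec, Matrix.updateRow_ne hk]
          rw [this]
          exact Ideal.subset_span ⟨k, hk, rfl⟩
      have h5 := Ideal.span_mono (Set.image_subset_range _ _) h4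
      rw [h3, add_sub_right_comm]
      exact Ideal.add_mem _ ih h5
  have : M Finset.univ = A := by funext i; simp [M]
  simpa [this] using key Finset.univ

lemma det_notMem (f : σ → MvPolynomial σ ℂ) (A : Matrix σ σ (MvPolynomial σ ℂ))
    (hA : ∀ i, (A.mulVec X) i = f i) (N : ℕ)
    (hN : ∀ i, (X i : MvPolynomial σ ℂ) ^ (N + 1) ∈ Ideal.span (Set.range f)) :
    A.det ∉ Ideal.span (Set.range f) := by
  intro hdet
  set I := Ideal.span (Set.range (fun k => (X k : MvPolynomial σ ℂ) ^ (N+1))) with hI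
  have hB : ∀ i, ∃ c : σ → MvPolynomial σ ℂ, ∑ j, c j * f j = X i ^ (N+1) := fun i =>
    (Ideal.mem_span_range_iff_exists_fun).1 (hN i)
  choose B hB using hB
  let B' : Matrix σ σ (MvPolynomial σ ℂ) := B
  have hB' : ∀ i, (B'.mulVec f) i = X i ^ (N+1) := hB
  have hf : A.mulVec X = f := funext hA
  have hD : ∀ i, ((Matrix.diagonal (fun i => (X i : MvPolynomial σ ℂ) ^ N)).mulVec X) i
      = X i ^ (N+1) := by
    intro i; rw [Matrix.mulVec_diagonal, pow_succ]
  have hC : ∀ i, ((B' * A).mulVec X) i = X i ^ (N+1) := by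
    intro i; rw [← Matrix.mulVec_mulVec, hf, hB']
  have h1 := det_sub_det_mem (N+1) _ _ hC hD
  rw [Matrix.det_mul, Matrix.det_diagonal] at h1
  have h2 : ∀ j, f j * B'.det ∈ I := det_mul_mem B' f I (fun i => by
    rw [hB']; exact Ideal.subset_span ⟨i, rfl⟩)
  have h3 : B'.det * A.det ∈ I := by
    obtain ⟨c, hc⟩ := (Ideal.mem_span_range_iff_exists_fun).1 hdet
    rw [← hc, Finset.mul_sum]
    refine Ideal.sum_mem _ fun j _ => ?_
    have := Ideal.mul_mem_left I (c j) (h2 j)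
    convert this using 1; ring
  apply prod_notMem_powSpan (σ := σ) N
  have := Ideal.sub_mem _ h3 h1
  simpa using this

end Alg
end LG
namespace LG

section Grad
set_option linter.unusedSectionVars false
variable {σ : Type*} [Fintype σ] [DecidableEq σ]

lemma IsQuasiHomogeneous.whom {W : MvPolynomial σ ℂ} {q : σ → ℚ} (h : IsQuasiHomogeneous W q) :
    IsWeightedHomogeneous q W 1 := by
  intro d hd
  rw [Finsupp.weight_eq_sum, ← h.2 d (mem_support_iff.2 hd)]
  simp

lemma whom_pderiv {W : MvPolynomial σ ℂ} {q : σ → ℚ} {n : ℚ}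
    (h : IsWeightedHomogeneous q W n) (i : σ) :
    IsWeightedHomogeneous q (pderiv i W) (n - q i) := h.pderiv (by ring)

lemma coeff_X_mul_pderiv (p : MvPolynomial σ ℂ) (j : σ) (d : σ →₀ ℕ) :
    coeff d (X j * pderiv j p) = (d j : ℂ) * coeff d p := by
  induction p using MvPolynomial.induction_on' with
  | monomial u a =>
    rw [X_mul_pderiv_monomial, nsmul_eq_mul, ← map_natCast (C : ℂ →+* MvPolynomial σ ℂ),
      coeff_C_mul, coeff_monomial]
    split_ifs with h
    · rw [h]
    · simp
  | add p r hp hr => rw [map_add, mul_add, coeff_add, hp, hr, coeff_add, mul_add]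

lemma euler {p : MvPolynomial σ ℂ} {q : σ → ℚ} {n : ℚ} (h : IsWeightedHomogeneous q p n) :
    ∑ j, C ((q j : ℚ) : ℂ) * (X j * pderiv j p) = C ((n : ℚ) : ℂ) * p := by
  ext d
  rw [coeff_sum]
  simp only [coeff_C_mul, coeff_X_mul_pderiv]
  by_cases hd : coeff d p = 0
  · simp [hd]
  · have := h hd
    rw [Finsupp.weight_eq_sum] at this
    rw [← this]
    push_cast
    rw [Finset.sum_mul]
    refine Finset.sum_congr rfl fun j _ => ?_
    simp; ring

lemma whom_hess {W : MvPolynomial σ ℂ} {q : σ → ℚ} (h : IsQuasiHomogeneous W q) :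
    IsWeightedHomogeneous q (hess W) (topDegree q) := by
  rw [hess, Matrix.det_apply]
  refine IsWeightedHomogeneous.sum _ _ _ fun s _ => ?_
  have h1 : IsWeightedHomogeneous q (∏ i, (Matrix.of fun i j => pderiv i (pderiv j W)) (s i) i)
      (topDegree q) := by
    have := IsWeightedHomogeneous.prod Finset.univ
      (fun i => pderiv (s i) (pderiv i W)) (fun i => 1 - q i - q (s i)) (w := q)
      (fun i _ => whom_pderiv (whom_pderiv h.whom i) (s i))
    convert this using 1
    · rfl
    rw [Finset.sum_sub_distrib, Equiv.sum_comp s q]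
    simp only [topDegree, Finset.sum_sub_distrib, two_mul, Finset.sum_add_distrib]
    ring
  rw [Units.smul_def, ← mem_weightedHomogeneousSubmodule]
  exact zsmul_mem h1 _

attribute [local instance] MvPolynomial.weightedGradedAlgebra

lemma comp_mem {W : MvPolynomial σ ℂ} {q : σ → ℚ} (h : IsQuasiHomogeneous W q)
    {p : MvPolynomial σ ℂ} (hp : p ∈ jacobianIdeal W) (d : ℚ) :
    weightedHomogeneousComponent q d p ∈ jacobianIdeal W := by
  apply weightedHomogeneousComponent_mem_of_mem ℂ q _ hp
  apply Ideal.homogeneous_span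
  rintro _ ⟨i, rfl⟩
  exact ⟨_, whom_pderiv h.whom i⟩

lemma exists_pow_mem {W : MvPolynomial σ ℂ} (h : Nondegenerate W) :
    ∃ N : ℕ, ∀ i, (X i : MvPolynomial σ ℂ) ^ (N + 1) ∈ jacobianIdeal W := by
  have h1 : ∀ i, ∃ n : ℕ, (X i : MvPolynomial σ ℂ) ^ n ∈ jacobianIdeal W := by
    intro i
    have : (X i : MvPolynomial σ ℂ) ∈ (jacobianIdeal W).radical := by
      rw [← vanishingIdeal_zeroLocus_eq_radical (K := ℂ), mem_vanishingIdeal_iff]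
      intro x hx
      rw [jacobianIdeal, zeroLocus_span] at hx
      have := h x (fun i => by simpa [aeval_eq_eval] using hx _ ⟨i, rfl⟩)
      simp [this]
    exact this
  choose n hn using h1
  refine ⟨∑ i, n i, fun i => ?_⟩
  refine Ideal.pow_mem_of_pow_mem _ (hn i) ?_
  have := Finset.single_le_sum (f := n) (fun _ _ => Nat.zero_le _) (Finset.mem_univ i)
  omega

lemma mkQ_surj (W : MvPolynomial σ ℂ) : Function.Surjective (mkQ W) :=
  Ideal.Quotient.mkₐ_surjective _ _

lemma mkQ_eq_zero {W p : MvPolynomial σ ℂ} : mkQ W p = 0 ↔ p ∈ jacobianIdeal W :=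
  Ideal.Quotient.eq_zero_iff_mem

lemma finite_milnor {W : MvPolynomial σ ℂ} (h : Nondegenerate W) :
    Module.Finite ℂ (MilnorRing W) := by
  obtain ⟨N, hN⟩ := exists_pow_mem h
  have h2 := Algebra.finite_adjoin_of_finite_of_isIntegral (R := ℂ)
    (s := Set.range fun i => mkQ W (X i)) (Set.finite_range _) (by
      rintro _ ⟨i, rfl⟩
      refine ⟨Polynomial.X ^ (N+1), Polynomial.monic_X_pow _, ?_⟩
      rw [Polynomial.eval₂_X_pow, ← map_pow, mkQ_eq_zero]
      exact hN i)
  have h3 : Algebra.adjoin ℂ (Set.range fun i => mkQ W (X i)) = ⊤ := by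
    have : (Set.range fun i => mkQ W (X i)) = mkQ W '' Set.range X := by
      rw [← Set.range_comp]; rfl
    rw [this, ← AlgHom.map_adjoin, adjoin_range_X, Algebra.map_top, AlgHom.range_eq_top]
    exact mkQ_surj W
  rw [h3] at h2
  exact Module.Finite.equiv (Subalgebra.topEquiv (R := ℂ) (A := MilnorRing W)).toLinearEquiv

lemma hess_notMem {W : MvPolynomial σ ℂ} {q : σ → ℚ} (hn : Nondegenerate W)
    (h : IsQuasiHomogeneous W q) (hne : jacobianIdeal W ≠ ⊤) :
    hess W ∉ jacobianIdeal W := by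
  obtain ⟨N, hN⟩ := exists_pow_mem hn
  let D₁ : Matrix σ σ (MvPolynomial σ ℂ) := Matrix.diagonal fun i => C (((1 - q i)⁻¹ : ℚ) : ℂ)
  let D₂ : Matrix σ σ (MvPolynomial σ ℂ) := Matrix.diagonal fun i => C ((q i : ℚ) : ℂ)
  let H : Matrix σ σ (MvPolynomial σ ℂ) := Matrix.of fun i j => pderiv i (pderiv j W)
  have hA : ∀ i, ((D₁ * (H.transpose * D₂)).mulVec X) i = pderiv i W := by
    intro i
    rw [← Matrix.mulVec_mulVec, Matrix.mulVec_diagonal]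
    have e := euler (whom_pderiv h.whom i)
    have : ((H.transpose * D₂).mulVec X) i = C (((1 - q i : ℚ)) : ℂ) * pderiv i W := by
      rw [← e, Matrix.mulVec, dotProduct]
      refine Finset.sum_congr rfl fun j _ => ?_
      rw [Matrix.mul_diagonal]
      simp only [H, Matrix.transpose_apply, Matrix.of_apply]
      ring
    rw [this, ← mul_assoc, ← C_mul]
    by_cases hq : 1 - q i = 0
    · have h0 : pderiv i W = 0 := by
        have hw := whom_pderiv h.whom i
        rw [hq] at hw
        have hC : pderiv i W = C (coeff 0 (pderiv i W)) := by
          ext d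
          rw [coeff_C]
          split_ifs with hd
          · rw [hd]
          · by_contra hc
            have h3 := hw hc
            rw [Finsupp.weight_eq_sum] at h3
            apply hd
            have := (Finset.sum_eq_zero_iff_of_nonneg (fun j _ => nsmul_nonneg (h.1 j).le _)).1 h3
            ext j
            have h4 := this j (Finset.mem_univ j)
            rw [nsmul_eq_mul, mul_eq_zero] at h4
            rcases h4 with h4 | h4
            · rw [Finsupp.zero_apply]; exact_mod_cast h4.symm
            · exact absurd h4 (h.1 j).ne'
        by_contra hc
        apply hne
        rw [hC] at hc
        have hc' : coeff 0 (pderiv i W) ≠ 0 := fun h => hc (by rw [h, C_0])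
        refine Ideal.eq_top_of_isUnit_mem _ (x := pderiv i W) (Ideal.subset_span ⟨i, rfl⟩) ?_
        rw [hC]
        exact (isUnit_iff_ne_zero.2 hc').map C
      rw [h0, mul_zero]
    · rw [← Rat.cast_mul, inv_mul_cancel₀ hq]; simp
  have key := det_notMem (fun i => pderiv i W) _ hA N hN
  intro hc
  apply key
  rw [Matrix.det_mul, Matrix.det_mul, Matrix.det_transpose]
  exact Ideal.mul_mem_left _ _ (Ideal.mul_mem_right _ _ hc)

/-- The component functional. -/
lemma exists_functional {W : MvPolynomial σ ℂ} {q : σ → ℚ} (hn : Nondegenerate W)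
    (h : IsQuasiHomogeneous W q) (hne : jacobianIdeal W ≠ ⊤) :
    ∃ l : MilnorRing W →ₗ[ℂ] ℂ, l (mkQ W (hess W)) = 1 ∧
      ∀ d, d ≠ topDegree q → ∀ a ∈ gradedPiece W q d, l a = 0 := by
  let P : Submodule ℂ (MvPolynomial σ ℂ) :=
    ⨆ (d : ℚ) (_ : d ≠ topDegree q), weightedHomogeneousSubmodule ℂ q d
  have hP : P ≤ LinearMap.ker (weightedHomogeneousComponent (R := ℂ) q (topDegree q)) := by
    refine iSup_le fun d => iSup_le fun hd => ?_
    intro p hp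
    exact IsWeightedHomogeneous.weightedHomogeneousComponent_ne (topDegree q) hp hd.symm
  have hx : mkQ W (hess W) ∉ P.map (mkQ W).toLinearMap := by
    rintro ⟨p, hp, hpe⟩
    have h1 : p - hess W ∈ jacobianIdeal W := by
      rw [← mkQ_eq_zero, map_sub, sub_eq_zero]; exact hpe
    have h2 := comp_mem h h1 (topDegree q)
    rw [map_sub, LinearMap.mem_ker.1 (hP hp),
      IsWeightedHomogeneous.weightedHomogeneousComponent_same (whom_hess h), zero_sub,
      neg_mem_iff] at h2
    exact hess_notMem hn h hne h2
  obtain ⟨f, hf, hf2⟩ := Submodule.exists_dual_map_eq_bot_of_notMem hx inferInstance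
  refine ⟨(f (mkQ W (hess W)))⁻¹ • f, by simp [hf], fun d hd a ha => ?_⟩
  have h1 : a ∈ P.map (mkQ W).toLinearMap :=
    Submodule.map_mono (le_iSup₂_of_le d hd le_rfl) ha
  have h2 : f a ∈ (P.map (mkQ W).toLinearMap).map f := ⟨a, h1, rfl⟩
  rw [hf2, Submodule.mem_bot] at h2
  simp [h2]

end Grad
end LG
namespace LG

section Sum
set_option linter.unusedSectionVars false

/-- Lift an algebra map to the Milnor ring. -/
def liftM {σ : Type*} [Fintype σ] [DecidableEq σ] {W : MvPolynomial σ ℂ} {B : Type*}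
    [Semiring B] [Algebra ℂ B]
    (f : MvPolynomial σ ℂ →ₐ[ℂ] B) (hf : ∀ i, f (pderiv i W) = 0) : MilnorRing W →ₐ[ℂ] B :=
  Ideal.Quotient.liftₐ (jacobianIdeal W) f (by
    intro a ha
    have : jacobianIdeal W ≤ RingHom.ker f := by
      rw [jacobianIdeal, Ideal.span_le]
      rintro _ ⟨i, rfl⟩
      exact hf i
    exact this ha)

lemma liftM_mkQ {σ : Type*} [Fintype σ] [DecidableEq σ] {W : MvPolynomial σ ℂ} {B : Type*}
    [Semiring B] [Algebra ℂ B]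
    (f : MvPolynomial σ ℂ →ₐ[ℂ] B) (hf : ∀ i, f (pderiv i W) = 0) (p) :
    liftM f hf (mkQ W p) = f p := rfl

lemma milnor_hom_ext {σ : Type*} [Fintype σ] [DecidableEq σ] {W : MvPolynomial σ ℂ} {B : Type*}
    [Semiring B] [Algebra ℂ B] {f g : MilnorRing W →ₐ[ℂ] B}
    (h : ∀ i, f (mkQ W (X i)) = g (mkQ W (X i))) : f = g := by
  have h1 : f.comp (mkQ W) = g.comp (mkQ W) := by
    apply MvPolynomial.algHom_ext; exact h
  apply AlgHom.ext
  intro x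
  obtain ⟨p, rfl⟩ := mkQ_surj W x
  exact DFunLike.congr_fun h1 p

lemma mkQ_pderiv {σ : Type*} [Fintype σ] [DecidableEq σ] (W : MvPolynomial σ ℂ) (i) :
    mkQ W (pderiv i W) = 0 := mkQ_eq_zero.2 (Ideal.subset_span ⟨i, rfl⟩)

variable {m k : ℕ} (W₁ V₁ : MvPolynomial (Fin m) ℂ) (W₂ V₂ : MvPolynomial (Fin k) ℂ)

lemma pderiv_inl_rename_inr (i : Fin m) (p : MvPolynomial (Fin k) ℂ) :
    pderiv (Sum.inl i) (rename (Sum.inr : Fin k → Fin m ⊕ Fin k) p) = 0 := by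
  apply pderiv_eq_zero_of_notMem_vars
  intro h
  have := vars_rename _ _ h
  simp at this

lemma pderiv_inr_rename_inl (i : Fin k) (p : MvPolynomial (Fin m) ℂ) :
    pderiv (Sum.inr i) (rename (Sum.inl : Fin m → Fin m ⊕ Fin k) p) = 0 := by
  apply pderiv_eq_zero_of_notMem_vars
  intro h
  have := vars_rename _ _ h
  simp at this

lemma pderiv_inl (i : Fin m) :
    pderiv (Sum.inl i) (sumPoly W₁ W₂) = rename Sum.inl (pderiv i W₁) := by
  rw [sumPoly, map_add, pderiv_inl_rename_inr, add_zero, pderiv_rename Sum.inl_injective]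

lemma pderiv_inr (i : Fin k) :
    pderiv (Sum.inr i) (sumPoly W₁ W₂) = rename Sum.inr (pderiv i W₂) := by
  rw [sumPoly, map_add, pderiv_inr_rename_inl, zero_add, pderiv_rename Sum.inr_injective]

lemma hess_sum : hess (sumPoly W₁ W₂) = rename Sum.inl (hess W₁) * rename Sum.inr (hess W₂) := by
  have : (Matrix.of fun i j => pderiv i (pderiv j (sumPoly W₁ W₂))) =
      Matrix.fromBlocks
        ((Matrix.of fun i j => pderiv i (pderiv j W₁)).map (rename (R := ℂ) Sum.inl)) 0 0
        ((Matrix.of fun i j => pderiv i (pderiv j W₂)).map (rename (R := ℂ) Sum.inr)) := by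
    ext1 i j
    rcases i with i | i <;> rcases j with j | j
    · simp [pderiv_inl, pderiv_rename Sum.inl_injective]
    · simp [pderiv_inr, pderiv_inl_rename_inr]
    · simp [pderiv_inl, pderiv_inr_rename_inl]
    · simp [pderiv_inr, pderiv_rename Sum.inr_injective]
  rw [hess, this, Matrix.det_fromBlocks_zero₂₁, hess, hess, AlgHom.map_det, AlgHom.map_det]
  rfl

def iotaL : MilnorRing W₁ →ₐ[ℂ] MilnorRing (sumPoly W₁ W₂) :=
  liftM ((mkQ (sumPoly W₁ W₂)).comp (rename Sum.inl)) (fun i => by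
    rw [AlgHom.comp_apply, ← pderiv_inl, mkQ_pderiv])

def iotaR : MilnorRing W₂ →ₐ[ℂ] MilnorRing (sumPoly W₁ W₂) :=
  liftM ((mkQ (sumPoly W₁ W₂)).comp (rename Sum.inr)) (fun i => by
    rw [AlgHom.comp_apply, ← pderiv_inr, mkQ_pderiv])

lemma iotaL_mkQ (p) : iotaL W₁ W₂ (mkQ W₁ p) = mkQ _ (rename Sum.inl p) := rfl
lemma iotaR_mkQ (p) : iotaR W₁ W₂ (mkQ W₂ p) = mkQ _ (rename Sum.inr p) := rfl

def toSum : MilnorRing W₁ ⊗[ℂ] MilnorRing W₂ →ₐ[ℂ] MilnorRing (sumPoly W₁ W₂) :=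
  Algebra.TensorProduct.productMap (iotaL W₁ W₂) (iotaR W₁ W₂)

def ofSumPoly : MvPolynomial (Fin m ⊕ Fin k) ℂ →ₐ[ℂ] MilnorRing W₁ ⊗[ℂ] MilnorRing W₂ :=
  aeval (Sum.elim (fun i => mkQ W₁ (X i) ⊗ₜ[ℂ] (1 : MilnorRing W₂))
    (fun i => (1 : MilnorRing W₁) ⊗ₜ[ℂ] mkQ W₂ (X i)))

lemma ofSumPoly_inl (p) : ofSumPoly W₁ W₂ (rename Sum.inl p) = mkQ W₁ p ⊗ₜ 1 := by
  have : (ofSumPoly W₁ W₂).comp (rename Sum.inl) =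
      (Algebra.TensorProduct.includeLeft (R := ℂ) (S := ℂ) (B := MilnorRing W₂)).comp (mkQ W₁) := by
    apply MvPolynomial.algHom_ext
    intro i
    simp [ofSumPoly]
  exact DFunLike.congr_fun this p

lemma ofSumPoly_inr (p) : ofSumPoly W₁ W₂ (rename Sum.inr p) = 1 ⊗ₜ mkQ W₂ p := by
  have : (ofSumPoly W₁ W₂).comp (rename Sum.inr) =
      (Algebra.TensorProduct.includeRight (R := ℂ) (A := MilnorRing W₁)).comp (mkQ W₂) := by
    apply MvPolynomial.algHom_ext
    intro i
    simp [ofSumPoly]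
  exact DFunLike.congr_fun this p

def ofSum : MilnorRing (sumPoly W₁ W₂) →ₐ[ℂ] MilnorRing W₁ ⊗[ℂ] MilnorRing W₂ :=
  liftM (ofSumPoly W₁ W₂) (by
    rintro (i | i)
    · rw [pderiv_inl, ofSumPoly_inl, mkQ_pderiv, TensorProduct.zero_tmul]
    · rw [pderiv_inr, ofSumPoly_inr, mkQ_pderiv, TensorProduct.tmul_zero])

def sumEquiv : MilnorRing W₁ ⊗[ℂ] MilnorRing W₂ ≃ₐ[ℂ] MilnorRing (sumPoly W₁ W₂) :=
  AlgEquiv.ofAlgHom (toSum W₁ W₂) (ofSum W₁ W₂)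
    (by
      apply milnor_hom_ext
      rintro (i | i)
      · simp [ofSum, liftM_mkQ, ofSumPoly, toSum, iotaL_mkQ]
      · simp [ofSum, liftM_mkQ, ofSumPoly, toSum, iotaR_mkQ])
    (by
      apply Algebra.TensorProduct.ext
      · apply milnor_hom_ext
        intro i
        simp [toSum, iotaL_mkQ, ofSum, liftM_mkQ, ofSumPoly]
      · apply milnor_hom_ext
        intro i
        simp [toSum, iotaR_mkQ, ofSum, liftM_mkQ, ofSumPoly])

lemma sumEquiv_tmul (a b) : sumEquiv W₁ W₂ (a ⊗ₜ b) = iotaL W₁ W₂ a * iotaR W₁ W₂ b := rfl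

lemma sumEquiv_symm (a b) :
    (sumEquiv W₁ W₂).symm (iotaL W₁ W₂ a * iotaR W₁ W₂ b) = a ⊗ₜ b := by
  rw [← sumEquiv_tmul, AlgEquiv.symm_apply_apply]

lemma mk_hess_sum : mkQ (sumPoly W₁ W₂) (hess (sumPoly W₁ W₂)) =
    iotaL W₁ W₂ (mkQ W₁ (hess W₁)) * iotaR W₁ W₂ (mkQ W₂ (hess W₂)) := by
  rw [hess_sum, map_mul, iotaL_mkQ, iotaR_mkQ]

lemma whom_rename_inl {q₁ : Fin m → ℚ} {q₂ : Fin k → ℚ} {p : MvPolynomial (Fin m) ℂ} {d : ℚ}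
    (h : IsWeightedHomogeneous q₁ p d) :
    IsWeightedHomogeneous (Sum.elim q₁ q₂) (rename Sum.inl p) d := by
  intro u hu
  obtain ⟨v, rfl, hv⟩ := coeff_rename_ne_zero _ _ _ hu
  rw [← h hv, Finsupp.weight_apply, Finsupp.weight_apply,
    Finsupp.sum_mapDomain_index (by simp) (by intros; simp [add_mul])]
  rfl

lemma whom_rename_inr {q₁ : Fin m → ℚ} {q₂ : Fin k → ℚ} {p : MvPolynomial (Fin k) ℂ} {d : ℚ}
    (h : IsWeightedHomogeneous q₂ p d) :
    IsWeightedHomogeneous (Sum.elim q₁ q₂) (rename Sum.inr p) d := by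
  intro u hu
  obtain ⟨v, rfl, hv⟩ := coeff_rename_ne_zero _ _ _ hu
  rw [← h hv, Finsupp.weight_apply, Finsupp.weight_apply,
    Finsupp.sum_mapDomain_index (by simp) (by intros; simp [add_mul])]
  rfl

variable {W₁ W₂}

lemma graded_mul {q₁ : Fin m → ℚ} {q₂ : Fin k → ℚ} {d₁ d₂ : ℚ} {a b}
    (ha : a ∈ gradedPiece W₁ q₁ d₁) (hb : b ∈ gradedPiece W₂ q₂ d₂) :
    iotaL W₁ W₂ a * iotaR W₁ W₂ b ∈ gradedPiece (sumPoly W₁ W₂) (Sum.elim q₁ q₂) (d₁ + d₂) := by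
  obtain ⟨p, hp, rfl⟩ := ha
  obtain ⟨r, hr, rfl⟩ := hb
  exact ⟨rename Sum.inl p * rename Sum.inr r,
    (whom_rename_inl hp).mul (whom_rename_inr hr), map_mul (mkQ _) _ _⟩

lemma graded_le {q₁ : Fin m → ℚ} {q₂ : Fin k → ℚ} {d : ℚ}
    (N : Submodule ℂ (MilnorRing (sumPoly W₁ W₂)))
    (h : ∀ d₁ d₂, d₁ + d₂ = d → ∀ a ∈ gradedPiece W₁ q₁ d₁, ∀ b ∈ gradedPiece W₂ q₂ d₂,
      iotaL W₁ W₂ a * iotaR W₁ W₂ b ∈ N) :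
    gradedPiece (sumPoly W₁ W₂) (Sum.elim q₁ q₂) d ≤ N := by
  rintro _ ⟨p, hp, rfl⟩
  rw [← p.support_sum_monomial_coeff, map_sum]
  refine Submodule.sum_mem _ fun u hu => ?_
  have hw := hp (mem_support_iff.1 hu)
  let u₁ : Fin m →₀ ℕ := u.comapDomain Sum.inl Sum.inl_injective.injOn
  let u₂ : Fin k →₀ ℕ := u.comapDomain Sum.inr Sum.inr_injective.injOn
  have hu' : u = u₁.mapDomain Sum.inl + u₂.mapDomain Sum.inr := by
    ext i
    rcases i with i | i
    · rw [Finsupp.add_apply, Finsupp.mapDomain_apply Sum.inl_injective,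
        Finsupp.mapDomain_of_notMem_range _ _ (by simp)]
      simp [u₁]
    · rw [Finsupp.add_apply, Finsupp.mapDomain_apply Sum.inr_injective,
        Finsupp.mapDomain_of_notMem_range _ _ (by simp)]
      simp [u₂]
  have e : monomial u (coeff u p) =
      rename Sum.inl (monomial u₁ (coeff u p)) * rename Sum.inr (monomial u₂ 1) := by
    rw [rename_monomial, rename_monomial, monomial_mul, mul_one, ← hu']
  rw [e]
  have := h (Finsupp.weight q₁ u₁) (Finsupp.weight q₂ u₂) (by
      rw [← hw, Finsupp.weight_eq_sum, Finsupp.weight_eq_sum, Finsupp.weight_eq_sum,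
        Fintype.sum_sum_type]
      rfl)
    _ ⟨_, isWeightedHomogeneous_monomial _ u₁ (coeff u p) rfl, rfl⟩
    _ ⟨_, isWeightedHomogeneous_monomial _ u₂ 1 rfl, rfl⟩
  convert this using 1
  exact map_mul (mkQ _) _ _

lemma nondeg_sum (h₁ : Nondegenerate W₁) (h₂ : Nondegenerate W₂) :
    Nondegenerate (sumPoly W₁ W₂) := by
  intro x hx
  have a1 := h₁ (x ∘ Sum.inl) (fun i => by
    have := hx (Sum.inl i); rwa [pderiv_inl, eval_rename] at this)
  have a2 := h₂ (x ∘ Sum.inr) (fun i => by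
    have := hx (Sum.inr i); rwa [pderiv_inr, eval_rename] at this)
  funext i
  rcases i with i | i
  · exact congrFun a1 i
  · exact congrFun a2 i

lemma top_sum (q₁ : Fin m → ℚ) (q₂ : Fin k → ℚ) :
    topDegree (Sum.elim q₁ q₂) = topDegree q₁ + topDegree q₂ := by
  simp only [topDegree, Fintype.sum_sum_type, Sum.elim_inl, Sum.elim_inr]

end Sum
end LG
namespace LG

section Pair
set_option linter.unusedSectionVars false

/-- nondegenerate, quasihomogeneous, with nonzero Milnor ring -/
structure Good {σ : Type*} [Fintype σ] [DecidableEq σ] (W : MvPolynomial σ ℂ) (q : σ → ℚ) :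
    Prop where
  nd : Nondegenerate W
  qh : IsQuasiHomogeneous W q
  ne : jacobianIdeal W ≠ ⊤

section one
variable {σ : Type*} [Fintype σ] [DecidableEq σ]

lemma Good.nontrivial {W : MvPolynomial σ ℂ} {q : σ → ℚ} (h : Good W q) :
    Nontrivial (MilnorRing W) := Ideal.Quotient.nontrivial_iff.2 h.ne

lemma Good.mu_ne {W : MvPolynomial σ ℂ} {q : σ → ℚ} (h : Good W q) :
    (Module.finrank ℂ (MilnorRing W) : ℂ) ≠ 0 := by
  have := h.nontrivial
  have := finite_milnor h.nd
  exact_mod_cast (Module.finrank_pos (R := ℂ) (M := MilnorRing W)).ne'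

lemma hess_mem {W : MvPolynomial σ ℂ} {q : σ → ℚ} (h : IsQuasiHomogeneous W q) :
    mkQ W (hess W) ∈ gradedPiece W q (topDegree q) := ⟨hess W, whom_hess h, rfl⟩

lemma functional_below {W : MvPolynomial σ ℂ} {q : σ → ℚ} {l : MilnorRing W →ₗ[ℂ] ℂ}
    (h : ∀ d, d ≠ topDegree q → ∀ a ∈ gradedPiece W q d, l a = 0) {a} (ha : a ∈ belowTop W q) :
    l a = 0 := by
  have : belowTop W q ≤ LinearMap.ker l :=
    iSup_le fun d => iSup_le fun hd a ha => h d hd.ne a ha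
  exact this ha

lemma eq_zero_of_top_below {W : MvPolynomial σ ℂ} {q : σ → ℚ} (h : IsQuasiHomogeneous W q)
    {a} (ha : a ∈ gradedPiece W q (topDegree q)) (hb : a ∈ belowTop W q) : a = 0 := by
  let P : Submodule ℂ (MvPolynomial σ ℂ) :=
    ⨆ (d : ℚ) (_ : d < topDegree q), weightedHomogeneousSubmodule ℂ q d
  have hP : P ≤ LinearMap.ker (weightedHomogeneousComponent (R := ℂ) q (topDegree q)) := by
    refine iSup_le fun d => iSup_le fun hd => ?_
    intro p hp
    exact IsWeightedHomogeneous.weightedHomogeneousComponent_ne (topDegree q) hp hd.ne'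
  have hb' : a ∈ P.map (mkQ W).toLinearMap := by
    have : belowTop W q ≤ P.map (mkQ W).toLinearMap :=
      iSup_le fun d => iSup_le fun hd => Submodule.map_mono (le_iSup₂_of_le d hd le_rfl)
    exact this hb
  obtain ⟨p, hp, rfl⟩ := ha
  obtain ⟨r, hr, hre⟩ := hb'
  have h1 : r - p ∈ jacobianIdeal W := by
    rw [← mkQ_eq_zero, map_sub, sub_eq_zero]; exact hre
  have h2 := comp_mem h h1 (topDegree q)
  rw [map_sub, LinearMap.mem_ker.1 (hP hr),
    IsWeightedHomogeneous.weightedHomogeneousComponent_same hp, zero_sub, neg_mem_iff] at h2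
  exact mkQ_eq_zero.2 h2

lemma pairing_of_coeff {W : MvPolynomial σ ℂ} {q : σ → ℚ} (h : Good W q) (t : MilnorRing W → ℂ)
    (ht : ∀ a, a - t a • mkQ W (hess W) ∈ belowTop W q) :
    IsMilnorPairing W q (fun a b => Module.finrank ℂ (MilnorRing W) * t (a * b)) := by
  intro a b
  rw [mul_div_cancel_left₀ _ h.mu_ne]
  exact ht _

lemma iso_hess {W V : MvPolynomial σ ℂ} {qW qV : σ → ℚ} (hW : Good W qW) (hV : Good V qV)
    (φ : MilnorRing W ≃ₐ[ℂ] MilnorRing V) (hgr : PreservesGrading ⇑φ qW qV)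
    (hp : PreservesPairings ⇑φ qW qV)
    (hWt : ∃ t : MilnorRing W → ℂ, ∀ a, a - t a • mkQ W (hess W) ∈ belowTop W qW)
    (hVt : ∃ t : MilnorRing V → ℂ, ∀ a, a - t a • mkQ V (hess V) ∈ belowTop V qV) :
    topDegree qW = topDegree qV ∧ φ (mkQ W (hess W)) = mkQ V (hess V) := by
  obtain ⟨t, ht⟩ := hWt
  obtain ⟨s, hs⟩ := hVt
  obtain ⟨l, hl1, hl0⟩ := exists_functional hW.nd hW.qh hW.ne
  obtain ⟨l', hl1', hl0'⟩ := exists_functional hV.nd hV.qh hV.ne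
  have h1 : t (mkQ W (hess W)) = 1 := by
    have := functional_below hl0 (ht (mkQ W (hess W)))
    rw [map_sub, map_smul, hl1, smul_eq_mul, mul_one, sub_eq_zero] at this
    exact this.symm
  have h2 := hp _ _ (pairing_of_coeff hW t ht) (pairing_of_coeff hV s hs) (mkQ W (hess W)) 1
  have hmu : Module.finrank ℂ (MilnorRing W) = Module.finrank ℂ (MilnorRing V) :=
    φ.toLinearEquiv.finrank_eq
  have h3 : s (φ (mkQ W (hess W))) = 1 := by
    simp only [map_one, mul_one, h1, hmu] at h2
    have := hV.mu_ne
    field_simp at h2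
    exact h2.symm
  have h4 := hs (φ (mkQ W (hess W)))
  rw [h3, one_smul] at h4
  have h5 := functional_below hl0' h4
  rw [map_sub, hl1', sub_eq_zero] at h5
  have hg := hgr _ _ (hess_mem hW.qh)
  have htop : topDegree qW = topDegree qV := by
    by_contra hne
    rw [hl0' _ hne _ hg] at h5
    exact zero_ne_one h5
  refine ⟨htop, ?_⟩
  rw [htop] at hg
  exact sub_eq_zero.1 (eq_zero_of_top_below hV.qh (Submodule.sub_mem _ hg (hess_mem hV.qh)) h4)

lemma preserves_of_hess {τ : Type*} [Fintype τ] [DecidableEq τ]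
    {W : MvPolynomial σ ℂ} {V : MvPolynomial τ ℂ} {qW : σ → ℚ} {qV : τ → ℚ}
    (hV : Good V qV)
    (φ : MilnorRing W ≃ₐ[ℂ] MilnorRing V) (hgr : PreservesGrading ⇑φ qW qV)
    (htop : topDegree qW = topDegree qV) (hh : φ (mkQ W (hess W)) = mkQ V (hess V)) :
    PreservesPairings ⇑φ qW qV := by
  intro pW pV hpW hpV a b
  obtain ⟨l', hl1', hl0'⟩ := exists_functional hV.nd hV.qh hV.ne
  have hmu : Module.finrank ℂ (MilnorRing W) = Module.finrank ℂ (MilnorRing V) :=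
    φ.toLinearEquiv.finrank_eq
  have hb : belowTop W qW ≤ (belowTop V qV).comap φ.toLinearMap :=
    iSup_le fun d => iSup_le fun hd x hx =>
      (le_iSup₂_of_le d (htop ▸ hd) le_rfl : gradedPiece V qV d ≤ belowTop V qV) (hgr d x hx)
  have h1 : φ (a * b - (pW a b / (Module.finrank ℂ (MilnorRing W) : ℂ)) • mkQ W (hess W)) ∈
    belowTop V qV := hb (hpW a b)
  rw [map_sub, map_smul, map_mul, hh, hmu] at h1
  have e1 := functional_below hl0' h1
  have e2 := functional_below hl0' (hpV (φ a) (φ b))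
  rw [map_sub, map_smul, hl1', smul_eq_mul, mul_one] at e1 e2
  have := sub_eq_zero.1 e1 ▸ sub_eq_zero.1 e2
  exact (div_left_inj' hV.mu_ne).1 this

end one

variable {m k : ℕ} {W₁ V₁ : MvPolynomial (Fin m) ℂ} {W₂ V₂ : MvPolynomial (Fin k) ℂ}
  {q₁ : Fin m → ℚ} {q₂ : Fin k → ℚ}

lemma exists_projL (l : MilnorRing W₂ →ₗ[ℂ] ℂ)
    (h : ∀ d, d ≠ topDegree q₂ → ∀ a ∈ gradedPiece W₂ q₂ d, l a = 0) :
    ∃ P : MilnorRing (sumPoly W₁ W₂) →ₗ[ℂ] MilnorRing W₁,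
      (∀ a b, P (iotaL W₁ W₂ a * iotaR W₁ W₂ b) = l b • a) ∧
      ∀ x ∈ belowTop (sumPoly W₁ W₂) (Sum.elim q₁ q₂), P x ∈ belowTop W₁ q₁ := by
  let P : MilnorRing (sumPoly W₁ W₂) →ₗ[ℂ] MilnorRing W₁ :=
    (TensorProduct.rid ℂ (MilnorRing W₁)).toLinearMap ∘ₗ
      (LinearMap.lTensor (MilnorRing W₁) l) ∘ₗ (sumEquiv W₁ W₂).symm.toLinearMap
  have hP : ∀ a b, P (iotaL W₁ W₂ a * iotaR W₁ W₂ b) = l b • a := by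
    intro a b
    change (TensorProduct.rid ℂ (MilnorRing W₁)) (LinearMap.lTensor (MilnorRing W₁) l
      ((sumEquiv W₁ W₂).symm (iotaL W₁ W₂ a * iotaR W₁ W₂ b))) = _
    rw [sumEquiv_symm, LinearMap.lTensor_tmul, TensorProduct.rid_tmul]
  refine ⟨P, hP, ?_⟩
  have : belowTop (sumPoly W₁ W₂) (Sum.elim q₁ q₂) ≤ (belowTop W₁ q₁).comap P := by
    refine iSup_le fun d => iSup_le fun hd => graded_le _ ?_
    intro d₁ d₂ hdd a ha b hb
    rw [Submodule.mem_comap, hP]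
    by_cases h2 : d₂ = topDegree q₂
    · rw [top_sum] at hd
      exact Submodule.smul_mem _ _ ((le_iSup₂_of_le d₁ (by linarith) le_rfl :
        gradedPiece W₁ q₁ d₁ ≤ belowTop W₁ q₁) ha)
    · rw [h _ h2 _ hb, zero_smul]; exact Submodule.zero_mem _
  exact this

lemma exists_projR (l : MilnorRing W₁ →ₗ[ℂ] ℂ)
    (h : ∀ d, d ≠ topDegree q₁ → ∀ a ∈ gradedPiece W₁ q₁ d, l a = 0) :
    ∃ P : MilnorRing (sumPoly W₁ W₂) →ₗ[ℂ] MilnorRing W₂,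
      (∀ a b, P (iotaL W₁ W₂ a * iotaR W₁ W₂ b) = l a • b) ∧
      ∀ x ∈ belowTop (sumPoly W₁ W₂) (Sum.elim q₁ q₂), P x ∈ belowTop W₂ q₂ := by
  let P : MilnorRing (sumPoly W₁ W₂) →ₗ[ℂ] MilnorRing W₂ :=
    (TensorProduct.lid ℂ (MilnorRing W₂)).toLinearMap ∘ₗ
      (LinearMap.rTensor (MilnorRing W₂) l) ∘ₗ (sumEquiv W₁ W₂).symm.toLinearMap
  have hP : ∀ a b, P (iotaL W₁ W₂ a * iotaR W₁ W₂ b) = l a • b := by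
    intro a b
    change (TensorProduct.lid ℂ (MilnorRing W₂)) (LinearMap.rTensor (MilnorRing W₂) l
      ((sumEquiv W₁ W₂).symm (iotaL W₁ W₂ a * iotaR W₁ W₂ b))) = _
    rw [sumEquiv_symm, LinearMap.rTensor_tmul, TensorProduct.lid_tmul]
  refine ⟨P, hP, ?_⟩
  have : belowTop (sumPoly W₁ W₂) (Sum.elim q₁ q₂) ≤ (belowTop W₂ q₂).comap P := by
    refine iSup_le fun d => iSup_le fun hd => graded_le _ ?_
    intro d₁ d₂ hdd a ha b hb
    rw [Submodule.mem_comap, hP]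
    by_cases h2 : d₁ = topDegree q₁
    · rw [top_sum] at hd
      exact Submodule.smul_mem _ _ ((le_iSup₂_of_le d₂ (by linarith) le_rfl :
        gradedPiece W₂ q₂ d₂ ≤ belowTop W₂ q₂) hb)
    · rw [h _ h2 _ ha, zero_smul]; exact Submodule.zero_mem _
  exact this

lemma coeffL (h₂ : Good W₂ q₂) {p}
    (hp : IsMilnorPairing (sumPoly W₁ W₂) (Sum.elim q₁ q₂) p) :
    ∃ t : MilnorRing W₁ → ℂ, ∀ a, a - t a • mkQ W₁ (hess W₁) ∈ belowTop W₁ q₁ := by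
  obtain ⟨l, hl1, hl0⟩ := exists_functional h₂.nd h₂.qh h₂.ne
  obtain ⟨P, hP, hP2⟩ := exists_projL (W₁ := W₁) (q₁ := q₁) l hl0
  refine ⟨fun a => p (iotaL W₁ W₂ a) (iotaR W₁ W₂ (mkQ W₂ (hess W₂))) /
    (Module.finrank ℂ (MilnorRing (sumPoly W₁ W₂)) : ℂ), fun a => ?_⟩
  have := hP2 _ (hp (iotaL W₁ W₂ a) (iotaR W₁ W₂ (mkQ W₂ (hess W₂))))
  rwa [map_sub, map_smul, mk_hess_sum, hP, hP, hl1, one_smul, one_smul] at this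

lemma coeffR (h₁ : Good W₁ q₁) {p}
    (hp : IsMilnorPairing (sumPoly W₁ W₂) (Sum.elim q₁ q₂) p) :
    ∃ t : MilnorRing W₂ → ℂ, ∀ a, a - t a • mkQ W₂ (hess W₂) ∈ belowTop W₂ q₂ := by
  obtain ⟨l, hl1, hl0⟩ := exists_functional h₁.nd h₁.qh h₁.ne
  obtain ⟨P, hP, hP2⟩ := exists_projR (W₂ := W₂) (q₂ := q₂) l hl0
  refine ⟨fun a => p (iotaL W₁ W₂ (mkQ W₁ (hess W₁))) (iotaR W₁ W₂ a) /
    (Module.finrank ℂ (MilnorRing (sumPoly W₁ W₂)) : ℂ), fun a => ?_⟩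
  have := hP2 _ (hp (iotaL W₁ W₂ (mkQ W₁ (hess W₁))) (iotaR W₁ W₂ a))
  rwa [map_sub, map_smul, mk_hess_sum, hP, hP, hl1, one_smul, one_smul] at this

lemma good_sum (h₁ : Good W₁ q₁) (h₂ : Good W₂ q₂) :
    Good (sumPoly W₁ W₂) (Sum.elim q₁ q₂) := by
  refine ⟨nondeg_sum h₁.nd h₂.nd, ⟨?_, ?_⟩, ?_⟩
  · rintro (i | i)
    · exact h₁.qh.1 i
    · exact h₂.qh.1 i
  · have : IsWeightedHomogeneous (Sum.elim q₁ q₂) (sumPoly W₁ W₂) 1 :=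
      (whom_rename_inl h₁.qh.whom).add (whom_rename_inr h₂.qh.whom)
    intro a ha
    rw [← this (mem_support_iff.1 ha), Finsupp.weight_eq_sum]
    simp
  · obtain ⟨l, hl1, hl0⟩ := exists_functional h₂.nd h₂.qh h₂.ne
    obtain ⟨P, hP, -⟩ := exists_projL (W₁ := W₁) (q₁ := q₁) l hl0
    have := h₁.nontrivial
    have e := hP 1 (mkQ W₂ (hess W₂))
    rw [hl1, one_smul] at e
    rw [← Ideal.Quotient.nontrivial_iff]
    refine ⟨⟨iotaL W₁ W₂ 1 * iotaR W₁ W₂ (mkQ W₂ (hess W₂)), 0, fun h0 => ?_⟩⟩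
    rw [h0, map_zero] at e
    exact zero_ne_one e

lemma good_of_pair {σ : Type*} [Fintype σ] [DecidableEq σ] {W V : MvPolynomial σ ℂ}
    {qW qV : σ → ℚ} (hW : Admissible W qW) (hV : Admissible V qV)
    (φ : MilnorRing W ≃ₐ[ℂ] MilnorRing V) (hp : PreservesPairings ⇑φ qW qV) :
    Good W qW ∧ Good V qV := by
  have h1 : Nontrivial (MilnorRing W) := by
    by_contra hc
    have s1 : Subsingleton (MilnorRing W) := not_nontrivial_iff_subsingleton.1 hc
    have s2 : Subsingleton (MilnorRing V) := φ.symm.toEquiv.subsingleton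
    have := hp (fun _ _ => 0) (fun _ _ => 1)
      (fun a b => by rw [Subsingleton.elim (a * b - _) 0]; exact Submodule.zero_mem _)
      (fun a b => by rw [Subsingleton.elim (a * b - _) 0]; exact Submodule.zero_mem _) 0 0
    exact zero_ne_one this
  have h2 : Nontrivial (MilnorRing V) := φ.symm.toEquiv.nontrivial
  exact ⟨⟨hW.1, hW.2.1, Ideal.Quotient.nontrivial_iff.1 h1⟩,
    ⟨hV.1, hV.2.1, Ideal.Quotient.nontrivial_iff.1 h2⟩⟩

end Pair

section Scale
set_option linter.unusedSectionVars false
variable {σ : Type*} [Fintype σ] [DecidableEq σ]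

lemma pderiv_scale (g : σ → ℂ) (i : σ) (p : MvPolynomial σ ℂ) :
    pderiv i (scaleVars g p) = C (g i) * scaleVars g (pderiv i p) := by
  induction p using MvPolynomial.induction_on with
  | C a => simp [scaleVars]
  | add p r hp hr => simp only [map_add, hp, hr, mul_add]
  | mul_X p j hp =>
    rw [map_mul, pderiv_mul, hp, pderiv_mul, map_add, map_mul, map_mul]
    have h1 : scaleVars g (X j) = C (g j) * X j := by simp [scaleVars]
    rw [h1, pderiv_C_mul, pderiv_X]
    by_cases h : j = i
    · subst h; simp; ring
    · simp [h]; ring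

def scaleQ (g : σ → ℂ) (W : MvPolynomial σ ℂ) (hg : ∀ i, g i ≠ 0) (hW : scaleVars g W = W) :
    MilnorRing W →ₐ[ℂ] MilnorRing W :=
  liftM ((mkQ W).comp (scaleVars g)) (fun i => by
    have h := pderiv_scale g i W
    rw [hW] at h
    have h2 : scaleVars g (pderiv i W) = C (g i)⁻¹ * pderiv i W := by
      conv_rhs => rw [h]
      rw [← mul_assoc, ← C_mul, inv_mul_cancel₀ (hg i), C_1, one_mul]
    rw [AlgHom.comp_apply, h2, map_mul, mkQ_pderiv, mul_zero])

lemma scaleQ_mkQ (g : σ → ℂ) (W : MvPolynomial σ ℂ) (hg : ∀ i, g i ≠ 0) (hW : scaleVars g W = W)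
    (p) : scaleQ g W hg hW (mkQ W p) = mkQ W (scaleVars g p) := rfl

lemma equivariant_iff (g : σ → ℂ) (W V : MvPolynomial σ ℂ) (hg : ∀ i, g i ≠ 0)
    (hW : scaleVars g W = W) (hV : scaleVars g V = V) (φ : MilnorRing W ≃ₐ[ℂ] MilnorRing V) :
    EquivariantAt W V ⇑φ g ↔ ∀ a, φ (scaleQ g W hg hW a) = scaleQ g V hg hV (φ a) := by
  have hprod : ∏ i, g i ≠ 0 := Finset.prod_ne_zero_iff.2 fun i _ => hg i
  constructor
  · intro h a
    obtain ⟨p, rfl⟩ := mkQ_surj W a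
    obtain ⟨r, hr⟩ := mkQ_surj V (φ (mkQ W p))
    have := h p r hr.symm
    rw [map_smul] at this
    rw [← hr, scaleQ_mkQ, scaleQ_mkQ]
    exact smul_right_injective _ hprod this
  · intro h p r hpr
    have := h (mkQ W p)
    rw [hpr, scaleQ_mkQ, scaleQ_mkQ] at this
    rw [map_smul, this]

lemma scale_inl {m k : ℕ} (g₁ : Fin m → ℂ) (g₂ : Fin k → ℂ) (p) :
    scaleVars (Sum.elim g₁ g₂) (rename Sum.inl p) = rename Sum.inl (scaleVars g₁ p) := by
  have : (scaleVars (Sum.elim g₁ g₂)).comp (rename Sum.inl) =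
    (rename Sum.inl).comp (scaleVars g₁) := by
    apply MvPolynomial.algHom_ext
    intro i
    simp [scaleVars]
  exact DFunLike.congr_fun this p

lemma scale_inr {m k : ℕ} (g₁ : Fin m → ℂ) (g₂ : Fin k → ℂ) (p) :
    scaleVars (Sum.elim g₁ g₂) (rename Sum.inr p) = rename Sum.inr (scaleVars g₂ p) := by
  have : (scaleVars (Sum.elim g₁ g₂)).comp (rename Sum.inr) =
    (rename Sum.inr).comp (scaleVars g₂) := by
    apply MvPolynomial.algHom_ext
    intro i
    simp [scaleVars]
  exact DFunLike.congr_fun this p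

end Scale

lemma exists_hom {A B : Type*} [CommRing A] [CommRing B] [Algebra ℂ A] [Algebra ℂ B]
    (φ : A ≃ₐ[ℂ] B) : ∃ F : A →ₐ[ℂ] B, ∀ x, F x = φ x := ⟨φ, fun _ => rfl⟩

lemma exists_lin {A B : Type*} [CommRing A] [CommRing B] [Algebra ℂ A] [Algebra ℂ B]
    (φ : A ≃ₐ[ℂ] B) : ∃ F : A →ₗ[ℂ] B, ∀ x, F x = φ x := ⟨φ.toLinearMap, fun _ => rfl⟩

section Phi
variable {m k : ℕ} {W₁ V₁ : MvPolynomial (Fin m) ℂ} {W₂ V₂ : MvPolynomial (Fin k) ℂ}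

lemma exists_phi (φ₁ : MilnorRing W₁ ≃ₐ[ℂ] MilnorRing V₁) (φ₂ : MilnorRing W₂ ≃ₐ[ℂ] MilnorRing V₂) :
    ∃ φ : MilnorRing (sumPoly W₁ W₂) ≃ₐ[ℂ] MilnorRing (sumPoly V₁ V₂),
      ∀ a b, φ (iotaL W₁ W₂ a * iotaR W₁ W₂ b) = iotaL V₁ V₂ (φ₁ a) * iotaR V₁ V₂ (φ₂ b) := by
  let φ : MilnorRing (sumPoly W₁ W₂) ≃ₐ[ℂ] MilnorRing (sumPoly V₁ V₂) :=
    (sumEquiv W₁ W₂).symm.trans ((Algebra.TensorProduct.congr φ₁ φ₂).trans (sumEquiv V₁ V₂))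
  have hφ : ∀ a b, φ (iotaL W₁ W₂ a * iotaR W₁ W₂ b) =
      iotaL V₁ V₂ (φ₁ a) * iotaR V₁ V₂ (φ₂ b) := by
    intro a b
    change sumEquiv V₁ V₂ (Algebra.TensorProduct.congr φ₁ φ₂
      ((sumEquiv W₁ W₂).symm (iotaL W₁ W₂ a * iotaR W₁ W₂ b))) = _
    rw [sumEquiv_symm, Algebra.TensorProduct.congr_apply, Algebra.TensorProduct.map_tmul,
      sumEquiv_tmul]
    rfl
  exact ⟨φ, hφ⟩

lemma phi_grading {qW₁ qV₁ : Fin m → ℚ} {qW₂ qV₂ : Fin k → ℚ}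
    (φ₁ : MilnorRing W₁ ≃ₐ[ℂ] MilnorRing V₁) (φ₂ : MilnorRing W₂ ≃ₐ[ℂ] MilnorRing V₂)
    (hgr₁ : PreservesGrading ⇑φ₁ qW₁ qV₁) (hgr₂ : PreservesGrading ⇑φ₂ qW₂ qV₂)
    (φ : MilnorRing (sumPoly W₁ W₂) ≃ₐ[ℂ] MilnorRing (sumPoly V₁ V₂))
    (hφ : ∀ a b, φ (iotaL W₁ W₂ a * iotaR W₁ W₂ b) = iotaL V₁ V₂ (φ₁ a) * iotaR V₁ V₂ (φ₂ b)) :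
    PreservesGrading ⇑φ (Sum.elim qW₁ qW₂) (Sum.elim qV₁ qV₂) := by
  intro d x hx
  obtain ⟨F, hF⟩ := exists_lin φ
  have h : gradedPiece (sumPoly W₁ W₂) (Sum.elim qW₁ qW₂) d ≤
      (gradedPiece (sumPoly V₁ V₂) (Sum.elim qV₁ qV₂) d).comap F := by
    apply graded_le
    intro d₁ d₂ hd a ha b hb
    rw [Submodule.mem_comap, hF, hφ, ← hd]
    exact graded_mul (hgr₁ _ _ ha) (hgr₂ _ _ hb)
  have h2 := Submodule.mem_comap.1 (h hx)
  rwa [hF] at h2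

end Phi

end LG

/-- equivariant graded pairing-preserving isomorphisms
`φᵢ : Q_{Wᵢ} → Q_{Vᵢ}` (with `Wᵢ, Vᵢ` admissible in disjoint sets of
variables, `Gᵢ` a group of common diagonal symmetries) combine to a
`(G₁ × G₂)`-equivariant graded pairing-preserving isomorphism
`Q_{W₁+W₂} → Q_{V₁+V₂}` acting as `ι₁(a)·ι₂(b) ↦ ι₁′(φ₁ a)·ι₂′(φ₂ b)`. -/
theorem tensor_of_equivariant_isomorphisms {m k : ℕ}
    (W₁ V₁ : MvPolynomial (Fin m) ℂ) (W₂ V₂ : MvPolynomial (Fin k) ℂ)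
    (qW₁ qV₁ : Fin m → ℚ) (qW₂ qV₂ : Fin k → ℚ)
    (hW₁ : Admissible W₁ qW₁) (hV₁ : Admissible V₁ qV₁)
    (hW₂ : Admissible W₂ qW₂) (hV₂ : Admissible V₂ qV₂)
    (G₁ : Set (Fin m → ℂ)) (G₂ : Set (Fin k → ℂ))
    (hG₁ : ∀ g ∈ G₁, (∀ i, g i ≠ 0) ∧ scaleVars g W₁ = W₁ ∧ scaleVars g V₁ = V₁)
    (hG₂ : ∀ g ∈ G₂, (∀ i, g i ≠ 0) ∧ scaleVars g W₂ = W₂ ∧ scaleVars g V₂ = V₂)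
    (φ₁ : MilnorRing W₁ ≃ₐ[ℂ] MilnorRing V₁)
    (φ₂ : MilnorRing W₂ ≃ₐ[ℂ] MilnorRing V₂)
    (hgr₁ : PreservesGrading ⇑φ₁ qW₁ qV₁) (hgr₂ : PreservesGrading ⇑φ₂ qW₂ qV₂)
    (heqv₁ : ∀ g ∈ G₁, EquivariantAt W₁ V₁ ⇑φ₁ g)
    (heqv₂ : ∀ g ∈ G₂, EquivariantAt W₂ V₂ ⇑φ₂ g)
    (hpair₁ : PreservesPairings ⇑φ₁ qW₁ qV₁)
    (hpair₂ : PreservesPairings ⇑φ₂ qW₂ qV₂) :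
    ∃ φ : MilnorRing (sumPoly W₁ W₂) ≃ₐ[ℂ] MilnorRing (sumPoly V₁ V₂),
      PreservesGrading ⇑φ (Sum.elim qW₁ qW₂) (Sum.elim qV₁ qV₂) ∧
      (∀ g₁ ∈ G₁, ∀ g₂ ∈ G₂,
        EquivariantAt (sumPoly W₁ W₂) (sumPoly V₁ V₂) ⇑φ (Sum.elim g₁ g₂)) ∧
      PreservesPairings ⇑φ (Sum.elim qW₁ qW₂) (Sum.elim qV₁ qV₂) ∧
      (∀ p r p' r', φ₁ (mkQ W₁ p) = mkQ V₁ p' → φ₂ (mkQ W₂ r) = mkQ V₂ r' →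
        φ (mkQ (sumPoly W₁ W₂) (rename Sum.inl p * rename Sum.inr r)) =
          mkQ (sumPoly V₁ V₂) (rename Sum.inl p' * rename Sum.inr r')) := by
  classical
  obtain ⟨φ, hφ⟩ := exists_phi φ₁ φ₂
  have hgr : PreservesGrading ⇑φ (Sum.elim qW₁ qW₂) (Sum.elim qV₁ qV₂) :=
    phi_grading φ₁ φ₂ hgr₁ hgr₂ φ hφ
  refine ⟨φ, hgr, ?_, ?_, ?_⟩
  · intro g₁ hg₁ g₂ hg₂
    obtain ⟨n₁, sW₁, sV₁⟩ := hG₁ g₁ hg₁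
    obtain ⟨n₂, sW₂, sV₂⟩ := hG₂ g₂ hg₂
    have hn : ∀ i, Sum.elim g₁ g₂ i ≠ 0 := by
      rintro (i | i)
      · exact n₁ i
      · exact n₂ i
    have sW : scaleVars (Sum.elim g₁ g₂) (sumPoly W₁ W₂) = sumPoly W₁ W₂ := by
      rw [sumPoly, map_add, scale_inl, scale_inr, sW₁, sW₂]
    have sV : scaleVars (Sum.elim g₁ g₂) (sumPoly V₁ V₂) = sumPoly V₁ V₂ := by
      rw [sumPoly, map_add, scale_inl, scale_inr, sV₁, sV₂]
    have e₁ := (equivariant_iff g₁ W₁ V₁ n₁ sW₁ sV₁ φ₁).1 (heqv₁ g₁ hg₁)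
    have e₂ := (equivariant_iff g₂ W₂ V₂ n₂ sW₂ sV₂ φ₂).1 (heqv₂ g₂ hg₂)
    have hsL : ∀ (U₁ : MvPolynomial (Fin m) ℂ) (U₂ : MvPolynomial (Fin k) ℂ) (s₁ s) (a),
        scaleQ (Sum.elim g₁ g₂) (sumPoly U₁ U₂) hn s (iotaL U₁ U₂ a) =
          iotaL U₁ U₂ (scaleQ g₁ U₁ n₁ s₁ a) := by
      intro U₁ U₂ s₁ s a
      obtain ⟨p, rfl⟩ := mkQ_surj U₁ a
      rw [iotaL_mkQ, scaleQ_mkQ, scaleQ_mkQ, iotaL_mkQ, scale_inl]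
    have hsR : ∀ (U₁ : MvPolynomial (Fin m) ℂ) (U₂ : MvPolynomial (Fin k) ℂ) (s₂ s) (a),
        scaleQ (Sum.elim g₁ g₂) (sumPoly U₁ U₂) hn s (iotaR U₁ U₂ a) =
          iotaR U₁ U₂ (scaleQ g₂ U₂ n₂ s₂ a) := by
      intro U₁ U₂ s₂ s a
      obtain ⟨p, rfl⟩ := mkQ_surj U₂ a
      rw [iotaR_mkQ, scaleQ_mkQ, scaleQ_mkQ, iotaR_mkQ, scale_inr]
    rw [equivariant_iff _ _ _ hn sW sV]
    have hL : ∀ a, φ (iotaL W₁ W₂ a) = iotaL V₁ V₂ (φ₁ a) := by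
      intro a; have := hφ a 1; simpa using this
    have hR : ∀ b, φ (iotaR W₁ W₂ b) = iotaR V₁ V₂ (φ₂ b) := by
      intro b; have := hφ 1 b; simpa using this
    obtain ⟨F, hF⟩ := exists_hom φ
    have hcomp : F.comp (scaleQ _ _ hn sW) = (scaleQ _ _ hn sV).comp F := by
      apply milnor_hom_ext
      rintro (i | i)
      · have h : mkQ (sumPoly W₁ W₂) (X (Sum.inl i)) = iotaL W₁ W₂ (mkQ W₁ (X i)) := by
          rw [iotaL_mkQ, rename_X]
        rw [h, AlgHom.comp_apply, AlgHom.comp_apply, hF, hF, hL, hsL _ _ sW₁, hsL _ _ sV₁, hL, e₁]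
      · have h : mkQ (sumPoly W₁ W₂) (X (Sum.inr i)) = iotaR W₁ W₂ (mkQ W₂ (X i)) := by
          rw [iotaR_mkQ, rename_X]
        rw [h, AlgHom.comp_apply, AlgHom.comp_apply, hF, hF, hR, hsR _ _ sW₂, hsR _ _ sV₂, hR, e₂]
    intro a
    have h := DFunLike.congr_fun hcomp a
    rwa [AlgHom.comp_apply, AlgHom.comp_apply, hF, hF] at h
  · obtain ⟨gW₁, gV₁⟩ := good_of_pair hW₁ hV₁ φ₁ hpair₁
    obtain ⟨gW₂, gV₂⟩ := good_of_pair hW₂ hV₂ φ₂ hpair₂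
    intro pW pV hpW hpV
    obtain ⟨t₁, h₁⟩ := iso_hess gW₁ gV₁ φ₁ hgr₁ hpair₁ (coeffL gW₂ hpW) (coeffL gV₂ hpV)
    obtain ⟨t₂, h₂⟩ := iso_hess gW₂ gV₂ φ₂ hgr₂ hpair₂ (coeffR gW₁ hpW) (coeffR gV₁ hpV)
    refine preserves_of_hess (good_sum gV₁ gV₂) φ hgr ?_ ?_ pW pV hpW hpV
    · rw [top_sum, top_sum, t₁, t₂]
    · rw [mk_hess_sum, mk_hess_sum, hφ, h₁, h₂]
  · intro p r p' r' hp hr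
    rw [map_mul (mkQ (sumPoly W₁ W₂)), map_mul (mkQ (sumPoly V₁ V₂)), ← iotaL_mkQ, ← iotaR_mkQ, hφ,
      hp, hr, iotaL_mkQ, iotaR_mkQ]
end
end

section
/- Fix an integer n ≥ 2, and let W = x² + y^{2n} and V = x² + xyⁿ in ℂ[x,y]. For every nonzero c ∈ ℂ, the ℂ-algebra homomorphism ℂ[x,y] → Q_V determined by x ↦ 0 and y ↦ c·[y] descends to a well-defined isomorphism of graded ℂ-algebras φ_c : Q_W → Q_V (both Milnor rings having weights (1/2, 1/(2n)) and monomial basis {1, y, y², …, y^{2n−2}}). Moreover, there exists a nonzero c ∈ ℂ for which φ_c also preserves the pairings. -/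
open MvPolynomial
open scoped TensorProduct

noncomputable section

open LG

/-- `W = x² + y^{2n}`. -/
def W7 (n : ℕ) : MvPolynomial (Fin 2) ℂ := X 0 ^ 2 + X 1 ^ (2 * n)

/-- `V = x² + xyⁿ`. -/
def V7 (n : ℕ) : MvPolynomial (Fin 2) ℂ := X 0 ^ 2 + X 0 * X 1 ^ n

/-- the common weights `(1/2, 1/(2n))`. -/
def q7 (n : ℕ) : Fin 2 → ℚ := ![1 / 2, 1 / (2 * (n : ℚ))]

def psi7 (n : ℕ) (t : ℂ) : MvPolynomial (Fin 2) ℂ →ₐ[ℂ] Polynomial ℂ :=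
  aeval ![Polynomial.C t * Polynomial.X ^ n, Polynomial.X]

/-- The data presenting the Milnor ring of `P` as `ℂ[y]/(y^{2n-1})`, `x = t yⁿ`. -/
structure Pres7 (n : ℕ) (t : ℂ) (P : MvPolynomial (Fin 2) ℂ) : Prop where
  hx : mkQ P (X 0) = t • mkQ P (X 1) ^ n
  hy : mkQ P (X 1) ^ (2 * n - 1) = 0
  hd : ∀ i, Polynomial.X ^ (2 * n - 1) ∣ psi7 n t (pderiv i P)

theorem mkQ_surj7 (P : MvPolynomial (Fin 2) ℂ) : Function.Surjective (mkQ P) :=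
  Ideal.Quotient.mk_surjective

theorem mkQ_eq_zero7 (P p : MvPolynomial (Fin 2) ℂ) : mkQ P p = 0 ↔ p ∈ jacobianIdeal P :=
  Ideal.Quotient.eq_zero_iff_mem

theorem Pres7.repr {n : ℕ} {t : ℂ} {P : MvPolynomial (Fin 2) ℂ} (h : Pres7 n t P)
    (p : MvPolynomial (Fin 2) ℂ) :
    mkQ P p = Polynomial.aeval (mkQ P (X 1)) (psi7 n t p) := by
  have : mkQ P = (Polynomial.aeval (mkQ P (X 1))).comp (psi7 n t) := by
    apply MvPolynomial.algHom_ext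
    intro i
    fin_cases i
    · simp [psi7, h.hx]
      exact Algebra.smul_def (A := MilnorRing P) t _
    · simp [psi7]
  exact DFunLike.congr_fun this p

theorem Pres7.mem_iff {n : ℕ} {t : ℂ} {P : MvPolynomial (Fin 2) ℂ} (h : Pres7 n t P)
    (p : MvPolynomial (Fin 2) ℂ) :
    mkQ P p = 0 ↔ Polynomial.X ^ (2 * n - 1) ∣ psi7 n t p := by
  constructor
  · intro hp
    rw [mkQ_eq_zero7] at hp
    have hle : jacobianIdeal P ≤ (Ideal.span {(Polynomial.X : Polynomial ℂ) ^ (2 * n - 1)}).comap (psi7 n t) := by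
      unfold jacobianIdeal
      rw [Ideal.span_le]
      rintro _ ⟨i, rfl⟩
      exact Ideal.mem_span_singleton.2 (h.hd i)
    exact Ideal.mem_span_singleton.1 (hle hp)
  · rintro ⟨g, hg⟩
    rw [h.repr, hg]
    simp [h.hy]

theorem Pres7.linInd {n : ℕ} {t : ℂ} {P : MvPolynomial (Fin 2) ℂ} (h : Pres7 n t P) :
    LinearIndependent ℂ (fun j : Fin (2 * n - 1) => mkQ P (X 1 ^ (j : ℕ))) := by
  rw [Fintype.linearIndependent_iff]
  intro g hg j
  have h1 : mkQ P (∑ i : Fin (2 * n - 1), g i • X 1 ^ (i : ℕ)) = 0 := by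
    rw [map_sum]; simpa only [map_smul] using hg
  rw [h.mem_iff, Polynomial.X_pow_dvd_iff] at h1
  have h2 := h1 j j.2
  simpa [psi7, Polynomial.coeff_X_pow, Fin.val_inj] using h2

theorem Pres7.span {n : ℕ} {t : ℂ} {P : MvPolynomial (Fin 2) ℂ} (h : Pres7 n t P) :
    Submodule.span ℂ
        (Set.range fun j : Fin (2 * n - 1) => mkQ P (X 1 ^ (j : ℕ))) = ⊤ := by
  rw [eq_top_iff]
  rintro a -
  obtain ⟨p, rfl⟩ := mkQ_surj7 P a
  rw [h.repr, Polynomial.aeval_eq_sum_range]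
  refine Submodule.sum_mem _ fun i _ => Submodule.smul_mem _ _ ?_
  by_cases hi : i < 2 * n - 1
  · exact Submodule.subset_span ⟨⟨i, hi⟩, by simp⟩
  · rw [pow_eq_zero_of_le (not_lt.1 hi) h.hy]
    exact Submodule.zero_mem _

theorem Pres7.finrank {n : ℕ} {t : ℂ} {P : MvPolynomial (Fin 2) ℂ} (h : Pres7 n t P) :
    Module.finrank ℂ (MilnorRing P) = 2 * n - 1 := by
  have := Module.finrank_eq_card_basis (Module.Basis.mk h.linInd h.span.ge)
  simpa using this

theorem Pres7.lift {n : ℕ} {t : ℂ} {P : MvPolynomial (Fin 2) ℂ} (h : Pres7 n t P)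
    {B : Type*} [CommRing B] [Algebra ℂ B] (y : B) (hy : y ^ (2 * n - 1) = 0) :
    ∃ f : MilnorRing P →ₐ[ℂ] B, ∀ p, f (mkQ P p) = Polynomial.aeval y (psi7 n t p) := by
  refine ⟨Ideal.Quotient.liftₐ (jacobianIdeal P) ((Polynomial.aeval y).comp (psi7 n t)) ?_, ?_⟩
  · intro a ha
    obtain ⟨g, hg⟩ := (h.mem_iff a).1 ((mkQ_eq_zero7 P a).2 ha)
    simp [hg, hy]
  · intro p
    rfl

theorem Pres7.equiv {n : ℕ} {t s : ℂ} {P R : MvPolynomial (Fin 2) ℂ} (h : Pres7 n t P)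
    (k : Pres7 n s R) (c : ℂ) (hc : c ≠ 0) :
    ∃ φ : MilnorRing P ≃ₐ[ℂ] MilnorRing R,
      ∀ p, φ (mkQ P p) = Polynomial.aeval (c • mkQ R (X 1)) (psi7 n t p) := by
  obtain ⟨f, hf⟩ := h.lift (c • mkQ R (X 1)) (by rw [smul_pow, k.hy, smul_zero])
  obtain ⟨g, hg⟩ := k.lift (c⁻¹ • mkQ P (X 1)) (by rw [smul_pow, h.hy, smul_zero])
  have f1 : f (mkQ P (X 1)) = c • mkQ R (X 1) := by rw [hf]; simp [psi7]
  have g1 : g (mkQ R (X 1)) = c⁻¹ • mkQ P (X 1) := by rw [hg]; simp [psi7]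
  have fg : ∀ b, f (g b) = b := by
    intro b
    obtain ⟨p, rfl⟩ := mkQ_surj7 R b
    rw [hg, ← Polynomial.aeval_algHom_apply, map_smul, f1, smul_smul, inv_mul_cancel₀ hc, one_smul,
      ← k.repr]
  have gf : ∀ b, g (f b) = b := by
    intro b
    obtain ⟨p, rfl⟩ := mkQ_surj7 P b
    rw [hf, ← Polynomial.aeval_algHom_apply, map_smul, g1, smul_smul, mul_inv_cancel₀ hc, one_smul,
      ← h.repr]
  exact ⟨AlgEquiv.ofAlgHom f g (AlgHom.ext fg) (AlgHom.ext gf), hf⟩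

theorem dW0 (n : ℕ) : pderiv 0 (W7 n) = ((2 : ℕ) : MvPolynomial (Fin 2) ℂ) * X 0 := by
  simp [W7, pderiv_X]

theorem dW1 (n : ℕ) : pderiv 1 (W7 n) = ((2 * n : ℕ) : MvPolynomial (Fin 2) ℂ) * X 1 ^ (2 * n - 1) := by
  simp [W7, pderiv_X]

theorem dV0 (n : ℕ) : pderiv 0 (V7 n) = ((2 : ℕ) : MvPolynomial (Fin 2) ℂ) * X 0 + X 1 ^ n := by
  simp [V7, pderiv_X]

theorem dV1 (n : ℕ) : pderiv 1 (V7 n) = (n : MvPolynomial (Fin 2) ℂ) * (X 0 * X 1 ^ (n - 1)) := by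
  simp [V7, pderiv_X]; ring

theorem mkQ_pderiv7 (P : MvPolynomial (Fin 2) ℂ) (i : Fin 2) : mkQ P (pderiv i P) = 0 :=
  (mkQ_eq_zero7 P _).2 (Ideal.subset_span ⟨i, rfl⟩)

theorem nat_cancel7 {B : Type*} [CommRing B] [Algebra ℂ B] (m : ℕ) (hm : m ≠ 0) (b : B)
    (h : (m : B) * b = 0) : b = 0 := by
  have h2 : (m : ℂ) • b = 0 := by rw [Algebra.smul_def]; simpa using h
  rcases smul_eq_zero.1 h2 with h3 | h3
  · exact absurd h3 (by exact_mod_cast hm)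
  · exact h3

theorem presW (n : ℕ) (hn : 2 ≤ n) : Pres7 n 0 (W7 n) := by
  refine ⟨?_, ?_, ?_⟩
  · have h := mkQ_pderiv7 (W7 n) 0
    rw [dW0, map_mul, map_natCast] at h
    rw [zero_smul]
    exact nat_cancel7 2 (by norm_num) _ h
  · have h := mkQ_pderiv7 (W7 n) 1
    rw [dW1, map_mul, map_natCast, map_pow] at h
    exact nat_cancel7 _ (by omega) _ h
  · intro i
    fin_cases i
    · simp [dW0, psi7]
    · simp [dW1, psi7]

theorem presV (n : ℕ) (hn : 2 ≤ n) : Pres7 n (-1/2) (V7 n) := by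
  have e : 2 * n - 1 = n + (n - 1) := by omega
  have hx : mkQ (V7 n) (X 0) = (-1/2 : ℂ) • mkQ (V7 n) (X 1) ^ n := by
    have h := mkQ_pderiv7 (V7 n) 0
    rw [dV0, map_add, map_mul, map_pow, map_natCast] at h
    have h' : (2 : ℂ) • mkQ (V7 n) (X 0) = - mkQ (V7 n) (X 1) ^ n := by
      have e9 : (2 : ℂ) • mkQ (V7 n) (X 0) = ((2 : ℕ) : MilnorRing (V7 n)) * mkQ (V7 n) (X 0) := by
        refine (Algebra.smul_def (A := MilnorRing (V7 n)) (2 : ℂ) _).trans ?_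
        rw [← map_natCast (algebraMap ℂ (MilnorRing (V7 n))) 2]
        norm_num
      rw [e9]
      exact eq_neg_of_add_eq_zero_left h
    calc _ = (1/2 : ℂ) • ((2 : ℂ) • mkQ (V7 n) (X 0)) := by rw [smul_smul]; norm_num
      _ = _ := by rw [h', smul_neg, ← neg_smul]; norm_num
  refine ⟨hx, ?_, ?_⟩
  · have h := mkQ_pderiv7 (V7 n) 1
    rw [dV1, map_mul, map_natCast] at h
    have h := nat_cancel7 _ (by omega) _ h
    rw [map_mul, hx, map_pow, smul_mul_assoc, ← pow_add, ← e] at h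
    rcases smul_eq_zero.1 h with h3 | h3
    · norm_num at h3
    · exact h3
  · intro i
    fin_cases i
    · have : psi7 n (-1/2) (pderiv 0 (V7 n)) = 0 := by
        rw [dV0]
        have h2 : (2 : Polynomial ℂ) * Polynomial.C (-1/2) = -1 := by
          rw [← Polynomial.C_ofNat, ← Polynomial.C_mul]; norm_num
        simp only [psi7, map_add, map_mul, map_pow, aeval_X, map_natCast]
        simp only [Matrix.cons_val_zero, Matrix.cons_val_one]
        push_cast
        linear_combination (Polynomial.X ^ n) * h2
      exact this ▸ dvd_zero _
    · refine ⟨(n : Polynomial ℂ) * Polynomial.C (-1/2), ?_⟩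
      change psi7 n (-1/2) (pderiv 1 (V7 n)) = _
      rw [dV1, e, pow_add]
      simp only [psi7, map_mul, map_pow, aeval_X, map_natCast]
      simp only [Matrix.cons_val_zero, Matrix.cons_val_one]
      ring

theorem psi7_monomial (n : ℕ) (t : ℂ) (d : Fin 2 →₀ ℕ) (r : ℂ) :
    psi7 n t (monomial d r) = Polynomial.C (r * t ^ d 0) * Polynomial.X ^ (n * d 0 + d 1) := by
  rw [psi7, aeval_monomial, Finsupp.prod_fintype _ _ (by simp)]
  simp [Fin.prod_univ_two, mul_pow, pow_add, pow_mul]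
  ring

theorem weight7 (n : ℕ) (hn : 2 ≤ n) (d : Fin 2 →₀ ℕ) :
    Finsupp.weight (q7 n) d = (n * d 0 + d 1 : ℕ) / (2 * n : ℚ) := by
  have : (n : ℚ) ≠ 0 := by positivity
  rw [Finsupp.weight_apply, Finsupp.sum_fintype _ _ (by simp)]
  simp [Fin.sum_univ_two, q7]
  field_simp

theorem psi7_coeff (n : ℕ) (hn : 2 ≤ n) (t : ℂ) (p : MvPolynomial (Fin 2) ℂ) (d : ℚ)
    (hp : IsWeightedHomogeneous (q7 n) p d) (m : ℕ) (hm : (m : ℚ) / (2 * n) ≠ d) :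
    (psi7 n t p).coeff m = 0 := by
  rw [p.as_sum, map_sum, Polynomial.finsetSum_coeff]
  refine Finset.sum_eq_zero fun a ha => ?_
  rw [psi7_monomial, Polynomial.coeff_C_mul_X_pow, if_neg]
  rintro rfl
  exact hm (by rw [← weight7 n hn]; exact hp (mem_support_iff.1 ha))

theorem grade7 (n : ℕ) (hn : 2 ≤ n) {t : ℂ} {P R : MvPolynomial (Fin 2) ℂ} (c : ℂ)
    (φ : MilnorRing P ≃ₐ[ℂ] MilnorRing R)
    (hφ : ∀ p, φ (mkQ P p) = Polynomial.aeval (c • mkQ R (X 1)) (psi7 n t p)) :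
    PreservesGrading ⇑φ (q7 n) (q7 n) := by
  rintro d _ ⟨p, hp, rfl⟩
  have hp' : IsWeightedHomogeneous (q7 n) p d := hp
  change φ (mkQ P p) ∈ _
  rw [hφ, Polynomial.aeval_eq_sum_range]
  refine Submodule.sum_mem _ fun i _ => ?_
  by_cases hi : (i : ℚ) / (2 * n) = d
  · refine Submodule.smul_mem _ _ ?_
    rw [smul_pow, ← map_pow]
    refine Submodule.smul_mem _ _ ⟨X 1 ^ i, ?_, rfl⟩
    have := (isWeightedHomogeneous_X ℂ (q7 n) 1).pow i
    have e : i • q7 n 1 = d := by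
      rw [← hi]; simp [q7]; field_simp
    rw [e] at this
    exact this
  · rw [psi7_coeff n hn t p d hp' i hi, zero_smul]
    exact Submodule.zero_mem _

/-- The top coefficient functional. -/
theorem Pres7.top {n : ℕ} (hn : 2 ≤ n) {t : ℂ} {P : MvPolynomial (Fin 2) ℂ} (h : Pres7 n t P) :
    ∃ l : MilnorRing P →ₗ[ℂ] ℂ, (∀ p, l (mkQ P p) = (psi7 n t p).coeff (2 * n - 2)) ∧
      belowTop P (q7 n) ≤ LinearMap.ker l := by
  let l0 : MvPolynomial (Fin 2) ℂ →ₗ[ℂ] ℂ :=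
    (Polynomial.lcoeff ℂ (2 * n - 2)).comp (psi7 n t).toLinearMap
  let l : MilnorRing P →ₗ[ℂ] ℂ := 
    Submodule.liftQ ((jacobianIdeal P).restrictScalars ℂ) l0 (by
      intro p hp
      have := (h.mem_iff p).1 ((mkQ_eq_zero7 P p).2 hp)
      rw [Polynomial.X_pow_dvd_iff] at this
      exact this _ (by omega))
  have hl : ∀ p, l (mkQ P p) = (psi7 n t p).coeff (2 * n - 2) := fun p => rfl
  refine ⟨l, hl, ?_⟩
  refine iSup₂_le fun d hd => ?_
  rintro _ ⟨p, hp, rfl⟩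
  change l (mkQ P p) = 0
  rw [hl]
  refine psi7_coeff n hn t p d hp _ ?_
  have hn' : (n : ℚ) ≠ 0 := by positivity
  have e : topDegree (q7 n) = ((2 * n - 2 : ℕ) : ℚ) / (2 * n) := by
    rw [Nat.cast_sub (by omega)]
    simp [topDegree, Fin.sum_univ_two, q7]
    field_simp
    ring
  rw [← e]
  exact hd.ne'

theorem hessW_top (n : ℕ) (hn : 2 ≤ n) :
    (psi7 n 0 (hess (W7 n))).coeff (2 * n - 2) = 4 * n * (2 * n - 1) := by
  have : hess (W7 n) = C (4 * n * (2 * n - 1) : ℂ) * X 1 ^ (2 * n - 2) := by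
    rw [hess, Matrix.det_fin_two]
    simp only [Matrix.of_apply, dW0, dW1, Derivation.leibniz, map_add, Derivation.map_natCast]
    have e : 2 * n - 1 - 1 = 2 * n - 2 := by omega
    have e2 : ((2 * n - 1 : ℕ) : MvPolynomial (Fin 2) ℂ) = 2 * n - 1 := by
      rw [Nat.cast_sub (by omega)]; simp
    simp [pderiv_X, e, e2, Derivation.leibniz]
    have e4 : (C 4 : MvPolynomial (Fin 2) ℂ) = 4 := rfl
    have e5 : (C 2 : MvPolynomial (Fin 2) ℂ) = 2 := rfl
    rw [e4, e5]
    ring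
  have h3 : psi7 n 0 (hess (W7 n)) = Polynomial.C (4 * n * (2 * n - 1) : ℂ) * Polynomial.X ^ (2 * n - 2) := by
    rw [this, map_mul, map_pow]
    simp only [psi7, aeval_X, aeval_C]
    simp only [Matrix.cons_val_one, Polynomial.algebraMap_eq]
    rfl
  rw [h3, Polynomial.coeff_C_mul_X_pow, if_pos rfl]

theorem hessV_top (n : ℕ) (hn : 2 ≤ n) :
    (psi7 n (-1/2) (hess (V7 n))).coeff (2 * n - 2) = - n * (2 * n - 1) := by
  have : hess (V7 n) = C (2 * n * (n - 1) : ℂ) * (X 0 * X 1 ^ (n - 2)) - C (n ^ 2 : ℂ) * X 1 ^ (2 * n - 2) := by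
    rw [hess, Matrix.det_fin_two]
    simp only [Matrix.of_apply, dV0, dV1, Derivation.leibniz, map_add, Derivation.map_natCast]
    have e : n - 1 - 1 = n - 2 := by omega
    have e1 : 2 * n - 2 = (n - 1) + (n - 1) := by omega
    have e2 : ((n - 1 : ℕ) : MvPolynomial (Fin 2) ℂ) = n - 1 := by
      rw [Nat.cast_sub (by omega)]; simp
    have e5 : (C 2 : MvPolynomial (Fin 2) ℂ) = 2 := rfl
    simp [pderiv_X, e, e2, Derivation.leibniz, e1, pow_add, e5]
    ring
  have e3 : n + (n - 2) = 2 * n - 2 := by omega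
  have h3 : psi7 n (-1/2) (hess (V7 n)) = Polynomial.C (2 * n * (n - 1) * (-1/2) - n ^ 2 : ℂ) * Polynomial.X ^ (2 * n - 2) := by
    rw [this]
    simp only [psi7, aeval_X, aeval_C, map_sub (aeval _), map_mul (aeval _), map_pow (aeval _)]
    simp only [Matrix.cons_val_zero, Matrix.cons_val_one, Polynomial.algebraMap_eq]
    rw [← e3, pow_add]
    simp only [Polynomial.C_sub, Polynomial.C_mul]
    ring
  rw [h3, Polynomial.coeff_C_mul_X_pow, if_pos rfl]
  ring

theorem pair7 (n : ℕ) (hn : 2 ≤ n) (c : ℂ) (hc : c ^ (2 * n - 2) = -1/4)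
    (φ : MilnorRing (W7 n) ≃ₐ[ℂ] MilnorRing (V7 n))
    (hφ : ∀ p, φ (mkQ (W7 n) p) = Polynomial.aeval (c • mkQ (V7 n) (X 1)) (psi7 n 0 p)) :
    PreservesPairings ⇑φ (q7 n) (q7 n) := by
  intro pW pV hW hV a b
  obtain ⟨lW, lW1, lW2⟩ := (presW n hn).top hn
  obtain ⟨lV, lV1, lV2⟩ := (presV n hn).top hn
  have hl : ∀ a, lV (φ a) = -1/4 * lW a := by
    intro a
    obtain ⟨p, rfl⟩ := mkQ_surj7 _ a
    have : φ (mkQ (W7 n) p) = mkQ (V7 n) (Polynomial.aeval (c • X 1) (psi7 n 0 p)) := by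
      rw [hφ, ← Polynomial.aeval_algHom_apply, map_smul]
    rw [this, lV1, lW1, ← Polynomial.aeval_algHom_apply, ← hc]
    have e : psi7 n (-1/2) (c • X 1) = Polynomial.C c * Polynomial.X := by
      simp [psi7, Polynomial.smul_eq_C_mul]
    rw [e, ← Polynomial.comp_eq_aeval, Polynomial.comp_C_mul_X_coeff, mul_comm]
  have h1 := lW2 (hW a b)
  have h2 := lV2 (hV (φ a) (φ b))
  rw [LinearMap.mem_ker, map_sub, map_smul, lW1, hessW_top n hn, (presW n hn).finrank] at h1
  rw [LinearMap.mem_ker, map_sub, map_smul, lV1, hessV_top n hn, (presV n hn).finrank, ← map_mul, hl] at h2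
  have hm : ((2 * n - 1 : ℕ) : ℂ) = 2 * n - 1 := by
    rw [Nat.cast_sub (by omega)]; simp
  have hm0 : (2 * n - 1 : ℂ) ≠ 0 := by
    rw [← hm]; exact_mod_cast (by omega : 2 * n - 1 ≠ 0)
  have hn0 : (n : ℂ) ≠ 0 := by exact_mod_cast (by omega : n ≠ 0)
  rw [hm, smul_eq_mul] at h1 h2
  have k1 : pW a b / (2 * n - 1) * (4 * n * (2 * n - 1)) = 4 * n * pW a b := by field_simp
  have k2 : pV (φ a) (φ b) / (2 * n - 1) * (- n * (2 * n - 1)) = - n * pV (φ a) (φ b) := by field_simp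
  rw [k1] at h1
  rw [k2] at h2
  apply mul_left_cancel₀ hn0
  linear_combination -1/4 * h1 - h2

theorem quasiAux7 (n : ℕ) (hn : 2 ≤ n) (P : MvPolynomial (Fin 2) ℂ)
    (h : IsWeightedHomogeneous (q7 n) P 1) : IsQuasiHomogeneous P (q7 n) := by
  refine ⟨?_, ?_⟩
  · intro i
    have : (0 : ℚ) < n := by positivity
    fin_cases i <;> simp [q7] <;> omega
  · intro a ha
    rw [← h (mem_support_iff.1 ha), Finsupp.weight_apply, Finsupp.sum_fintype _ _ (by simp)]
    simp

theorem quasi7 (n : ℕ) (hn : 2 ≤ n) :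
    IsQuasiHomogeneous (W7 n) (q7 n) ∧ IsQuasiHomogeneous (V7 n) (q7 n) := by
  have hn' : (n : ℚ) ≠ 0 := by positivity
  have hx := isWeightedHomogeneous_X ℂ (q7 n) 0
  have hy := isWeightedHomogeneous_X ℂ (q7 n) 1
  have e1 : 2 • q7 n 0 = 1 := by simp [q7]
  have e2 : (2 * n) • q7 n 1 = 1 := by simp [q7]; field_simp
  have e3 : q7 n 0 + n • q7 n 1 = 1 := by simp [q7]; field_simp; norm_num
  have h1 := hx.pow 2
  have h2 := hy.pow (2 * n)
  have h3 := hx.mul (hy.pow n)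
  rw [e1] at h1
  rw [e2] at h2
  rw [e3] at h3
  exact ⟨quasiAux7 n hn _ (h1.add h2), quasiAux7 n hn _ (h1.add h3)⟩

set_option maxHeartbeats 1000000 in
/-- for `W = x² + y^{2n}` and `V = x² + xyⁿ` (`n ≥ 2`), both with
weights `(1/2, 1/(2n))` and monomial basis `{1, y, …, y^{2n-2}}` of the Milnor
ring, each nonzero `c ∈ ℂ` yields a graded algebra isomorphism
`φ_c : Q_W ≃ Q_V` with `x ↦ 0`, `y ↦ c·[y]`, and for some nonzero `c` the
isomorphism `φ_c` also preserves the pairings. -/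
theorem example_fermat_chain (n : ℕ) (hn : 2 ≤ n) :
    IsQuasiHomogeneous (W7 n) (q7 n) ∧ IsQuasiHomogeneous (V7 n) (q7 n) ∧
    (LinearIndependent ℂ (fun j : Fin (2 * n - 1) => mkQ (W7 n) (X 1 ^ (j : ℕ))) ∧
      Submodule.span ℂ
        (Set.range fun j : Fin (2 * n - 1) => mkQ (W7 n) (X 1 ^ (j : ℕ))) = ⊤) ∧
    (LinearIndependent ℂ (fun j : Fin (2 * n - 1) => mkQ (V7 n) (X 1 ^ (j : ℕ))) ∧
      Submodule.span ℂ
        (Set.range fun j : Fin (2 * n - 1) => mkQ (V7 n) (X 1 ^ (j : ℕ))) = ⊤) ∧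
    (∀ c : ℂ, c ≠ 0 → ∃ φ : MilnorRing (W7 n) ≃ₐ[ℂ] MilnorRing (V7 n),
      φ (mkQ (W7 n) (X 0)) = 0 ∧ φ (mkQ (W7 n) (X 1)) = c • mkQ (V7 n) (X 1) ∧
      PreservesGrading ⇑φ (q7 n) (q7 n)) ∧
    (∃ c : ℂ, c ≠ 0 ∧ ∃ φ : MilnorRing (W7 n) ≃ₐ[ℂ] MilnorRing (V7 n),
      φ (mkQ (W7 n) (X 0)) = 0 ∧ φ (mkQ (W7 n) (X 1)) = c • mkQ (V7 n) (X 1) ∧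
      PreservesGrading ⇑φ (q7 n) (q7 n) ∧ PreservesPairings ⇑φ (q7 n) (q7 n)) := by
  have key : ∀ c : ℂ, c ≠ 0 → ∃ φ : MilnorRing (W7 n) ≃ₐ[ℂ] MilnorRing (V7 n),
      (∀ p, φ (mkQ (W7 n) p) = Polynomial.aeval (c • mkQ (V7 n) (X 1)) (psi7 n 0 p)) ∧
      φ (mkQ (W7 n) (X 0)) = 0 ∧ φ (mkQ (W7 n) (X 1)) = c • mkQ (V7 n) (X 1) ∧
      PreservesGrading ⇑φ (q7 n) (q7 n) := by
    intro c hc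
    obtain ⟨φ, hφ⟩ := (presW n hn).equiv (presV n hn) c hc
    refine ⟨φ, hφ, ?_, ?_, grade7 n hn c φ hφ⟩
    · rw [hφ]; simp [psi7]
    · rw [hφ]; simp [psi7]
  refine ⟨(quasi7 n hn).1, (quasi7 n hn).2, ⟨(presW n hn).linInd, (presW n hn).span⟩,
    ⟨(presV n hn).linInd, (presV n hn).span⟩, ?_, ?_⟩
  · intro c hc
    obtain ⟨φ, -, h⟩ := key c hc
    exact ⟨φ, h⟩
  · obtain ⟨c, hc⟩ := IsAlgClosed.exists_pow_nat_eq (-1/4 : ℂ) (n := 2 * n - 2) (by omega)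
    have hc0 : c ≠ 0 := by
      rintro rfl
      rw [zero_pow (by omega)] at hc
      norm_num at hc
    obtain ⟨φ, hφ, h1, h2, h3⟩ := key c hc0
    exact ⟨c, hc0, φ, h1, h2, h3, pair7 n hn c hc φ hφ⟩
end
end

section
/- Fix an integer n ≥ 2, and let W = x² + xyⁿ + y^{2n} and V = x² + xyⁿ in ℂ[x,y]. For every nonzero c ∈ ℂ, the assignment y ↦ c·[y] (together with x ↦ the class determined by the relation 2x + yⁿ = 0, i.e. x ↦ −cⁿ[yⁿ]/2) induces a well-defined isomorphism of graded ℂ-algebras φ_c : Q_W → Q_V, both Milnor rings having weights (1/2, 1/(2n)) and monomial basis {1, y, y², …, y^{2n−2}}. Moreover, there exists a nonzero c ∈ ℂ for which φ_c also preserves the pairings. -/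
open MvPolynomial
open scoped TensorProduct

noncomputable section

open LG

/-- `W = x² + xyⁿ + y^{2n}`. -/
def W8 (n : ℕ) : MvPolynomial (Fin 2) ℂ := X 0 ^ 2 + X 0 * X 1 ^ n + X 1 ^ (2 * n)

/-- `V = x² + xyⁿ`. -/
def V8 (n : ℕ) : MvPolynomial (Fin 2) ℂ := X 0 ^ 2 + X 0 * X 1 ^ n

/-- the common weights `(1/2, 1/(2n))`. -/
def q8 (n : ℕ) : Fin 2 → ℚ := ![1 / 2, 1 / (2 * (n : ℚ))]

namespace LG8

/-- the common family `x² + xyⁿ + ε y^{2n}`. -/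
def U (n : ℕ) (ε : ℂ) : MvPolynomial (Fin 2) ℂ :=
  X 0 ^ 2 + X 0 * X 1 ^ n + C ε * X 1 ^ (2 * n)

lemma W8_eq (n : ℕ) : W8 n = U n 1 := by simp [W8, U]
lemma V8_eq (n : ℕ) : V8 n = U n 0 := by simp [V8, U]

/-- substitution `x ↦ -yⁿ/2`. -/
def ev (n : ℕ) : MvPolynomial (Fin 2) ℂ →ₐ[ℂ] Polynomial ℂ :=
  aeval ![Polynomial.C (-1/2) * Polynomial.X ^ n, Polynomial.X]

lemma ev_X0 (n : ℕ) : ev n (X 0) = Polynomial.C (-1/2) * Polynomial.X ^ n := by simp [ev]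
lemma ev_X1 (n : ℕ) : ev n (X 1) = Polynomial.X := by simp [ev]
lemma ev_C (n : ℕ) (a : ℂ) : ev n (C a) = Polynomial.C a := by
  simp [ev]

lemma d0 (n : ℕ) (ε : ℂ) : pderiv 0 (U n ε) = C 2 * X 0 + X 1 ^ n := by
  have h : (pderiv (0 : Fin 2)) (X 1 : MvPolynomial (Fin 2) ℂ) = 0 := by
    rw [pderiv_X]; simp
  have h2 : (C 2 : MvPolynomial (Fin 2) ℂ) = 2 := map_ofNat C 2
  simp [U, Derivation.leibniz_pow, h, h2]
lemma d1 (m : ℕ) (ε : ℂ) : pderiv 1 (U (m+2) ε) =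
    C ((m:ℂ)+2) * X 0 * X 1 ^ (m+1) + C (2 * ((m:ℂ)+2) * ε) * X 1 ^ (2*m+3) := by
  have h : (pderiv (1 : Fin 2)) (X 0 : MvPolynomial (Fin 2) ℂ) = 0 := by
    rw [pderiv_X]; simp
  have e : 2 * (m+2) - 1 = 2*m+3 := by omega
  have h2 : (C 2 : MvPolynomial (Fin 2) ℂ) = 2 := map_ofNat C 2
  simp [U, Derivation.leibniz_pow, h, e, h2]
  ring

lemma mk_X0 (n : ℕ) (ε : ℂ) : mkQ (U n ε) (X 0) = mkQ (U n ε) (C (-1/2) * X 1 ^ n) := by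
  rw [mkQ, Ideal.Quotient.mkₐ_eq_mk, Ideal.Quotient.eq]
  have h : (X 0 - C (-1/2) * X 1 ^ n : MvPolynomial (Fin 2) ℂ) = C (1/2) * pderiv 0 (U n ε) := by
    rw [d0, mul_add, ← mul_assoc, ← C_mul]
    have : (C (-1/2) : MvPolynomial (Fin 2) ℂ) = - C (1/2) := by rw [← C_neg]; norm_num
    rw [this]; norm_num
  rw [h]
  exact Ideal.mul_mem_left _ _ (Ideal.subset_span ⟨0, rfl⟩)

lemma mk_eq (n : ℕ) (ε : ℂ) (p : MvPolynomial (Fin 2) ℂ) :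
    mkQ (U n ε) p = mkQ (U n ε) (Polynomial.aeval (X 1) (ev n p)) := by
  have : mkQ (U n ε) = ((mkQ (U n ε)).comp (Polynomial.aeval (X 1))).comp (ev n) := by
    apply MvPolynomial.algHom_ext
    intro i
    fin_cases i
    · simp [ev_X0, mk_X0]
    · simp [ev_X1]
  exact DFunLike.congr_fun this p

lemma ev_d1 (m : ℕ) (ε : ℂ) : ev (m+2) (pderiv 1 (U (m+2) ε)) =
    Polynomial.C (((m:ℂ)+2) * (2*ε - 1/2)) * Polynomial.X ^ (2*m+3) := by
  rw [d1]
  simp only [map_add, map_mul, map_pow, ev_X0, ev_X1, ev_C]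
  have : (-1/2:ℂ) = -(1/2) := by ring
  rw [this]
  simp only [Polynomial.C_neg, Polynomial.C_sub]
  simp only [Polynomial.C_mul]
  ring

lemma mk_pow_zero (m : ℕ) (ε : ℂ) (hε : 2*ε - 1/2 ≠ 0) :
    mkQ (U (m+2) ε) (X 1 ^ (2*m+3)) = 0 := by
  have h0 : mkQ (U (m+2) ε) (pderiv 1 (U (m+2) ε)) = 0 := by
    rw [mkQ, Ideal.Quotient.mkₐ_eq_mk, Ideal.Quotient.eq_zero_iff_mem]
    exact Ideal.subset_span ⟨1, rfl⟩
  rw [mk_eq, ev_d1] at h0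
  have hk : ((m:ℂ)+2) * (2*ε - 1/2) ≠ 0 := mul_ne_zero (by norm_cast) hε
  rw [← Polynomial.smul_eq_C_mul, map_smul, map_smul] at h0
  have := (smul_eq_zero.1 h0).resolve_left hk
  simpa using this

lemma mem_J (m : ℕ) (ε : ℂ) (hε : 2*ε - 1/2 ≠ 0) (p : MvPolynomial (Fin 2) ℂ) :
    p ∈ jacobianIdeal (U (m+2) ε) ↔ ∀ j < 2*m+3, (ev (m+2) p).coeff j = 0 := by
  rw [← Polynomial.X_pow_dvd_iff]
  constructor
  · intro h
    have : jacobianIdeal (U (m+2) ε) ≤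
        (Ideal.span {(Polynomial.X : Polynomial ℂ) ^ (2*m+3)}).comap (ev (m+2)) := by
      rw [jacobianIdeal, Ideal.span_le]
      rintro _ ⟨i, rfl⟩
      fin_cases i
      · simp only [Fin.zero_eta, SetLike.mem_coe, Ideal.mem_comap, d0]
        simp only [map_add, map_mul, map_pow, ev_X0, ev_X1, ev_C]
        rw [← mul_assoc, ← Polynomial.C_mul]
        norm_num
      · simp only [Fin.mk_one, SetLike.mem_coe, Ideal.mem_comap, ev_d1]
        exact Ideal.mul_mem_left _ _ (Ideal.subset_span rfl)
    exact Ideal.mem_span_singleton.1 (this h)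
  · rintro ⟨g, hg⟩
    rw [← Ideal.Quotient.eq_zero_iff_mem]
    have h := mk_eq (m+2) ε p
    rw [hg, map_mul, map_mul, map_pow, Polynomial.aeval_X, mk_pow_zero m ε hε, zero_mul] at h
    exact h

/-- The coefficient map. -/
def cof (n : ℕ) (N : ℕ) : MvPolynomial (Fin 2) ℂ →ₗ[ℂ] (Fin N → ℂ) :=
  LinearMap.pi fun j => (Polynomial.lcoeff ℂ (j:ℕ)) ∘ₗ (ev n).toLinearMap

lemma mk_inj (m : ℕ) (ε : ℂ) (hε : 2*ε - 1/2 ≠ 0) (p r : MvPolynomial (Fin 2) ℂ) :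
    mkQ (U (m+2) ε) p = mkQ (U (m+2) ε) r ↔
      ∀ j < 2*m+3, (ev (m+2) p).coeff j = (ev (m+2) r).coeff j := by
  rw [mkQ, Ideal.Quotient.mkₐ_eq_mk, Ideal.Quotient.eq, mem_J m ε hε]
  simp [sub_eq_zero]

lemma mk_surj (W : MvPolynomial (Fin 2) ℂ) (a : MilnorRing W) : ∃ p, mkQ W p = a :=
  Ideal.Quotient.mk_surjective a

lemma indep (m : ℕ) (ε : ℂ) (hε : 2*ε - 1/2 ≠ 0) (N : ℕ) (hN : N = 2*m+3) :
    LinearIndependent ℂ (fun j : Fin N => mkQ (U (m+2) ε) (X 1 ^ (j : ℕ))) := by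
  rw [Fintype.linearIndependent_iff]
  intro g hg i
  have : mkQ (U (m+2) ε) (∑ j : Fin N, g j • X 1 ^ (j:ℕ)) = mkQ (U (m+2) ε) 0 := by
    simpa using hg
  rw [mk_inj m ε hε] at this
  have := this i (by omega)
  simp only [map_sum, map_smul, map_pow, ev_X1, Polynomial.finsetSum_coeff,
    Polynomial.coeff_smul, Polynomial.coeff_X_pow, map_zero, Polynomial.coeff_zero] at this
  simpa [Fin.val_inj] using this

lemma mk_sum (m : ℕ) (ε : ℂ) (hε : 2*ε - 1/2 ≠ 0) (p : MvPolynomial (Fin 2) ℂ) :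
    mkQ (U (m+2) ε) p = ∑ j ∈ Finset.range (2*m+3),
      (ev (m+2) p).coeff j • mkQ (U (m+2) ε) (X 1 ^ j) := by
  have : ∑ j ∈ Finset.range (2*m+3), (ev (m+2) p).coeff j • mkQ (U (m+2) ε) (X 1 ^ j)
    = mkQ (U (m+2) ε) (∑ j ∈ Finset.range (2*m+3), (ev (m+2) p).coeff j • (X 1 ^ j)) := by
    simp
  rw [this, mk_inj m ε hε]
  intro j hj
  simp only [map_sum, map_smul, map_pow, ev_X1, Polynomial.finsetSum_coeff,
    Polynomial.coeff_smul, Polynomial.coeff_X_pow]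
  simp
  intro h; omega

lemma spans (m : ℕ) (ε : ℂ) (hε : 2*ε - 1/2 ≠ 0) (N : ℕ) (hN : N = 2*m+3) :
    Submodule.span ℂ
        (Set.range fun j : Fin N => mkQ (U (m+2) ε) (X 1 ^ (j : ℕ))) = ⊤ := by
  rw [eq_top_iff]
  rintro a -
  obtain ⟨p, rfl⟩ := mk_surj _ a
  rw [mk_sum m ε hε]
  refine Submodule.sum_mem _ fun j hj => Submodule.smul_mem _ _ (Submodule.subset_span ?_)
  exact ⟨⟨j, by rw [hN]; exact Finset.mem_range.1 hj⟩, rfl⟩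

lemma rank (m : ℕ) (ε : ℂ) (hε : 2*ε - 1/2 ≠ 0) :
    Module.finrank ℂ (MilnorRing (U (m+2) ε)) = 2*m+3 := by
  rw [Module.finrank_eq_card_basis
    (Module.Basis.mk (indep m ε hε _ rfl) (spans m ε hε _ rfl).ge), Fintype.card_fin]

/-- rescaling -/
def th (n : ℕ) (c : ℂ) : MvPolynomial (Fin 2) ℂ →ₐ[ℂ] MvPolynomial (Fin 2) ℂ :=
  aeval ![(-(c^n/2)) • X 1 ^ n, c • X 1]

lemma ev_th (n : ℕ) (c : ℂ) (p : MvPolynomial (Fin 2) ℂ) :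
    ev n (th n c p) = (ev n p).comp (Polynomial.C c * Polynomial.X) := by
  have : (ev n).comp (th n c) =
      (Polynomial.aeval (Polynomial.C c * Polynomial.X : Polynomial ℂ)).comp (ev n) := by
    apply MvPolynomial.algHom_ext
    intro i
    fin_cases i
    · simp [th, ev_X0, ev_X1, Polynomial.smul_eq_C_mul, mul_pow]
      rw [← mul_assoc, ← Polynomial.C_pow, ← Polynomial.C_mul, ← neg_mul, ← Polynomial.C_neg]
      congr 2; ring
    · simp [th, ev_X1, Polynomial.smul_eq_C_mul]
  have := DFunLike.congr_fun this p
  simpa [Polynomial.aeval_def, Polynomial.comp, Polynomial.eval₂_eq_eval_map] using this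

lemma coeff_th (n : ℕ) (c : ℂ) (p : MvPolynomial (Fin 2) ℂ) (j : ℕ) :
    (ev n (th n c p)).coeff j = (ev n p).coeff j * c ^ j := by
  rw [ev_th, Polynomial.comp_C_mul_X_coeff]

/-- the map `φ_c` -/
def phi (m : ℕ) (ε δ : ℂ) (hε : 2*ε - 1/2 ≠ 0) (hδ : 2*δ - 1/2 ≠ 0) (c : ℂ) :
    MilnorRing (U (m+2) ε) →ₐ[ℂ] MilnorRing (U (m+2) δ) :=
  Ideal.Quotient.liftₐ _ ((mkQ (U (m+2) δ)).comp (th (m+2) c)) (by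
    intro p hp
    rw [mem_J m ε hε] at hp
    have : mkQ (U (m+2) δ) (th (m+2) c p) = mkQ (U (m+2) δ) 0 := by
      rw [mk_inj m δ hδ]
      intro j hj
      rw [coeff_th, hp j hj]; simp
    simpa using this)

lemma phi_mk (m : ℕ) (ε δ : ℂ) (hε : 2*ε - 1/2 ≠ 0) (hδ : 2*δ - 1/2 ≠ 0) (c : ℂ)
    (p : MvPolynomial (Fin 2) ℂ) :
    phi m ε δ hε hδ c (mkQ _ p) = mkQ _ (th (m+2) c p) := rfl

lemma phi_comp (m : ℕ) (ε δ : ℂ) (hε : 2*ε - 1/2 ≠ 0) (hδ : 2*δ - 1/2 ≠ 0) (c d : ℂ)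
    (h : c * d = 1) :
    (phi m δ ε hδ hε d).comp (phi m ε δ hε hδ c) = AlgHom.id ℂ _ := by
  apply AlgHom.ext
  intro a
  obtain ⟨p, rfl⟩ := mk_surj _ a
  rw [AlgHom.comp_apply, phi_mk, phi_mk, AlgHom.id_apply, mk_inj m ε hε]
  intro j _
  rw [coeff_th, coeff_th, mul_assoc, ← mul_pow, h]; simp

/-- the isomorphism `φ_c` -/
def phiE (m : ℕ) (ε δ : ℂ) (hε : 2*ε - 1/2 ≠ 0) (hδ : 2*δ - 1/2 ≠ 0) (c : ℂ) (hc : c ≠ 0) :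
    MilnorRing (U (m+2) ε) ≃ₐ[ℂ] MilnorRing (U (m+2) δ) :=
  AlgEquiv.ofAlgHom (phi m ε δ hε hδ c) (phi m δ ε hδ hε c⁻¹)
    (phi_comp m δ ε hδ hε _ _ (inv_mul_cancel₀ hc)) (phi_comp m ε δ hε hδ _ _ (mul_inv_cancel₀ hc))

lemma phiE_mk (m : ℕ) (ε δ : ℂ) (hε : 2*ε - 1/2 ≠ 0) (hδ : 2*δ - 1/2 ≠ 0) (c : ℂ) (hc : c ≠ 0)
    (p : MvPolynomial (Fin 2) ℂ) :
    phiE m ε δ hε hδ c hc (mkQ _ p) = mkQ _ (th (m+2) c p) := rfl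

lemma wX0 (n : ℕ) : IsWeightedHomogeneous (q8 n) (X 0 : MvPolynomial (Fin 2) ℂ) (1/2) := by
  simpa [q8] using isWeightedHomogeneous_X ℂ (q8 n) 0
lemma wX1 (n : ℕ) (j : ℕ) : IsWeightedHomogeneous (q8 n) (X 1 ^ j : MvPolynomial (Fin 2) ℂ)
    (j / (2 * n)) := by
  have := (isWeightedHomogeneous_X ℂ (q8 n) 1).pow j
  simpa [q8, div_eq_mul_inv] using this

lemma quasi (m : ℕ) (ε : ℂ) : IsQuasiHomogeneous (U (m+2) ε) (q8 (m+2)) := by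
  constructor
  · intro i
    fin_cases i
    · simp [q8]
    · simp [q8]; positivity
  · intro a ha
    have hm : ((m:ℚ) + 2) ≠ 0 := by positivity
    have hw : IsWeightedHomogeneous (q8 (m+2)) (U (m+2) ε) 1 := by
      unfold U
      refine IsWeightedHomogeneous.add (IsWeightedHomogeneous.add ?_ ?_) ?_
      · convert (wX0 (m+2)).pow 2 using 1; norm_num
      · convert (wX0 (m+2)).mul (wX1 (m+2) (m+2)) using 1
        push_cast; field_simp; norm_num
      · convert (isWeightedHomogeneous_C (q8 (m+2)) ε).mul (wX1 (m+2) (2*(m+2))) using 1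
        push_cast; field_simp; norm_num
    have := hw (mem_support_iff.1 ha)
    rw [Finsupp.weight_apply, Finsupp.sum_fintype _ _ (by simp)] at this
    simpa using this

lemma ev_hom (m : ℕ) (d : ℚ) (p : MvPolynomial (Fin 2) ℂ)
    (hp : IsWeightedHomogeneous (q8 (m+2)) p d) (j : ℕ) (hj : (ev (m+2) p).coeff j ≠ 0) :
    (j : ℚ) / (2 * ((m+2 : ℕ):ℚ)) = d := by
  have hm : ((m:ℚ) + 2) ≠ 0 := by positivity
  rw [ev, aeval_def, eval₂_eq', Polynomial.finsetSum_coeff] at hj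
  obtain ⟨a, ha, h⟩ := Finset.exists_ne_zero_of_sum_ne_zero hj
  have hw := hp (mem_support_iff.1 ha)
  rw [Finsupp.weight_apply, Finsupp.sum_fintype _ _ (by simp)] at hw
  simp only [Fin.sum_univ_two, Fin.prod_univ_two, q8, Matrix.cons_val_zero, Matrix.cons_val_one,
    ← Polynomial.C_eq_algebraMap, Polynomial.coeff_C_mul, mul_pow, ← pow_mul, ← Polynomial.C_pow,
    mul_assoc, ← pow_add, Polynomial.coeff_X_pow] at h hw
  have hj' : j = (m+2) * a 0 + a 1 := by
    by_contra hne
    simp [hne] at h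
  rw [← hw, hj']
  simp
  field_simp

lemma graded (m : ℕ) (ε : ℂ) (hε : 2*ε - 1/2 ≠ 0) (d : ℚ) (p : MvPolynomial (Fin 2) ℂ)
    (hp : ∀ j < 2*m+3, (ev (m+2) p).coeff j ≠ 0 → (j : ℚ) / (2 * ((m+2 : ℕ):ℚ)) = d) :
    mkQ (U (m+2) ε) p ∈ gradedPiece (U (m+2) ε) (q8 (m+2)) d := by
  rw [mk_sum m ε hε]
  refine Submodule.sum_mem _ fun j hj => ?_
  by_cases h : (ev (m+2) p).coeff j = 0
  · rw [h, zero_smul]; exact Submodule.zero_mem _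
  · refine Submodule.smul_mem _ _ (Submodule.mem_map.2 ⟨X 1 ^ j, ?_, rfl⟩)
    rw [mem_weightedHomogeneousSubmodule, ← hp j (Finset.mem_range.1 hj) h]
    exact wX1 _ _

lemma pres_grading (m : ℕ) (ε δ : ℂ) (hε : 2*ε - 1/2 ≠ 0) (hδ : 2*δ - 1/2 ≠ 0) (c : ℂ)
    (hc : c ≠ 0) : PreservesGrading ⇑(phiE m ε δ hε hδ c hc) (q8 (m+2)) (q8 (m+2)) := by
  rintro d _ ⟨p, hp, rfl⟩
  rw [SetLike.mem_coe, mem_weightedHomogeneousSubmodule] at hp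
  refine graded m δ hδ d (th (m+2) c p) fun j _ h => ?_
  rw [coeff_th] at h
  exact ev_hom m d p hp j (left_ne_zero_of_mul h)

/-- top coefficient functional -/
def top (m : ℕ) (ε : ℂ) (hε : 2*ε - 1/2 ≠ 0) : MilnorRing (U (m+2) ε) →ₗ[ℂ] ℂ :=
  Submodule.liftQ ((jacobianIdeal (U (m+2) ε)).restrictScalars ℂ)
    ((Polynomial.lcoeff ℂ (2*m+2)) ∘ₗ (ev (m+2)).toLinearMap) (by
      intro p hp
      exact (mem_J m ε hε p).1 hp _ (by omega))

lemma top_mk (m : ℕ) (ε : ℂ) (hε : 2*ε - 1/2 ≠ 0) (p : MvPolynomial (Fin 2) ℂ) :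
    top m ε hε (mkQ _ p) = (ev (m+2) p).coeff (2*m+2) := rfl

lemma top_below (m : ℕ) (ε : ℂ) (hε : 2*ε - 1/2 ≠ 0) (a : MilnorRing (U (m+2) ε))
    (ha : a ∈ belowTop (U (m+2) ε) (q8 (m+2))) : top m ε hε a = 0 := by
  have : belowTop (U (m+2) ε) (q8 (m+2)) ≤ LinearMap.ker (top m ε hε) := by
    refine iSup₂_le fun d hd => ?_
    rintro _ ⟨p, hp, rfl⟩
    rw [SetLike.mem_coe, mem_weightedHomogeneousSubmodule] at hp
    rw [LinearMap.mem_ker]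
    change (ev (m+2) p).coeff (2*m+2) = 0
    by_contra h
    have := ev_hom m d p hp _ h
    rw [← this] at hd
    have hm : ((m:ℚ) + 2) ≠ 0 := by positivity
    refine hd.ne ?_
    simp [topDegree, q8]
    field_simp
    ring
  exact this ha

lemma top_hess (m : ℕ) (ε : ℂ) (hε : 2*ε - 1/2 ≠ 0) :
    top m ε hε (mkQ _ (hess (U (m+2) ε))) = ((m:ℂ)+2) * (2*m+3) * (4*ε-1) := by
  have h0 : (pderiv (1 : Fin 2)) (X 0 : MvPolynomial (Fin 2) ℂ) = 0 := by
    rw [pderiv_X]; simp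
  have h1 : (pderiv (0 : Fin 2)) (X 1 : MvPolynomial (Fin 2) ℂ) = 0 := by
    rw [pderiv_X]; simp
  rw [top_mk]
  have : ev (m+2) (hess (U (m+2) ε)) =
      Polynomial.C (((m:ℂ)+2) * (2*m+3) * (4*ε-1)) * Polynomial.X ^ (2*m+2) := by
    have f3 : ev (m+2) 2 = 2 := map_ofNat (ev (m+2)) 2
    have f4 : ev (m+2) 3 = 3 := map_ofNat (ev (m+2)) 3
    have g2 : (Polynomial.C 2 : Polynomial ℂ) = 2 := map_ofNat Polynomial.C 2
    have g3 : (Polynomial.C 3 : Polynomial ℂ) = 3 := map_ofNat Polynomial.C 3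
    have g4 : (Polynomial.C 4 : Polynomial ℂ) = 4 := map_ofNat Polynomial.C 4
    have e : (Polynomial.C (-1/2) : Polynomial ℂ) = - Polynomial.C (1/2) := by
      rw [← Polynomial.C_neg]; norm_num
    have e2 : (2 : Polynomial ℂ) * Polynomial.C (1/2) = 1 := by
      rw [← g2, ← Polynomial.C_mul]; norm_num
    rw [hess, Matrix.det_fin_two]
    simp only [Matrix.of_apply, d0, d1]
    simp [Derivation.leibniz_pow, h0, h1, ev_X0, ev_X1, ev_C, e, f3, f4, g2, g3, g4]
    simp only [← one_div]
    linear_combination (-((m:Polynomial ℂ)+2)*((m:Polynomial ℂ)+1)*Polynomial.X^(2*m+2)) * e2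
  rw [this, Polynomial.coeff_C_mul_X_pow, if_pos rfl]

lemma pres_pair (m : ℕ) (ε δ : ℂ) (hε : 2*ε - 1/2 ≠ 0) (hδ : 2*δ - 1/2 ≠ 0) (c : ℂ)
    (hc : c ≠ 0) (hcc : c ^ (2*m+2) * (4*ε-1) = 4*δ-1) :
    PreservesPairings ⇑(phiE m ε δ hε hδ c hc) (q8 (m+2)) (q8 (m+2)) := by
  intro pW pV hW hV a b
  have h1 := top_below m ε hε _ (hW a b)
  have h2 := top_below m δ hδ _ (hV (phiE m ε δ hε hδ c hc a) (phiE m ε δ hε hδ c hc b))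
  rw [map_sub, map_smul, top_hess, rank m _ (by assumption), sub_eq_zero] at h1 h2
  rw [← map_mul] at h2
  have h3 : top m δ hδ (phiE m ε δ hε hδ c hc (a*b)) = top m ε hε (a*b) * c ^ (2*m+2) := by
    obtain ⟨p, hp⟩ := mk_surj _ (a*b)
    rw [← hp, phiE_mk, top_mk, top_mk, coeff_th]
  rw [h3, h1, ← hcc] at h2
  have k1 : (2*(m:ℂ)+3) ≠ 0 := by norm_cast
  have k2 : ((m:ℂ)+2) ≠ 0 := by norm_cast
  have k3 : 4*ε-1 ≠ 0 := by
    intro h; apply hε; linear_combination h/2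
  have k4 := pow_ne_zero (2*m+2) hc
  push_cast at h2
  simp only [smul_eq_mul] at h2
  have k : c ^ (2*m+2) * (4*ε-1) * ((m:ℂ)+2) ≠ 0 := by positivity
  apply mul_left_cancel₀ k
  field_simp at h2 ⊢
  linear_combination h2

lemma phiE_X (m : ℕ) (ε δ : ℂ) (hε : 2*ε - 1/2 ≠ 0) (hδ : 2*δ - 1/2 ≠ 0) (c : ℂ) (hc : c ≠ 0) :
    phiE m ε δ hε hδ c hc (mkQ _ (X 0)) = -(c ^ (m+2) / 2) • mkQ _ (X 1 ^ (m+2)) ∧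
    phiE m ε δ hε hδ c hc (mkQ _ (X 1)) = c • mkQ _ (X 1) := by
  rw [phiE_mk, phiE_mk]
  constructor <;> simp [th]

end LG8

set_option maxHeartbeats 1000000 in
/-- for `W = x² + xyⁿ + y^{2n}` and `V = x² + xyⁿ` (`n ≥ 2`), both
with weights `(1/2, 1/(2n))` and monomial basis `{1, y, …, y^{2n-2}}` of the
Milnor ring, each nonzero `c ∈ ℂ` yields a graded algebra isomorphism
`φ_c : Q_W ≃ Q_V` with `y ↦ c·[y]` and `x ↦ -cⁿ[yⁿ]/2`, and for some nonzero
`c` the isomorphism `φ_c` also preserves the pairings. -/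
theorem example_loop_chain (n : ℕ) (hn : 2 ≤ n) :
    IsQuasiHomogeneous (W8 n) (q8 n) ∧ IsQuasiHomogeneous (V8 n) (q8 n) ∧
    (LinearIndependent ℂ (fun j : Fin (2 * n - 1) => mkQ (W8 n) (X 1 ^ (j : ℕ))) ∧
      Submodule.span ℂ
        (Set.range fun j : Fin (2 * n - 1) => mkQ (W8 n) (X 1 ^ (j : ℕ))) = ⊤) ∧
    (LinearIndependent ℂ (fun j : Fin (2 * n - 1) => mkQ (V8 n) (X 1 ^ (j : ℕ))) ∧
      Submodule.span ℂ
        (Set.range fun j : Fin (2 * n - 1) => mkQ (V8 n) (X 1 ^ (j : ℕ))) = ⊤) ∧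
    (∀ c : ℂ, c ≠ 0 → ∃ φ : MilnorRing (W8 n) ≃ₐ[ℂ] MilnorRing (V8 n),
      φ (mkQ (W8 n) (X 0)) = -(c ^ n / 2) • mkQ (V8 n) (X 1 ^ n) ∧
      φ (mkQ (W8 n) (X 1)) = c • mkQ (V8 n) (X 1) ∧
      PreservesGrading ⇑φ (q8 n) (q8 n)) ∧
    (∃ c : ℂ, c ≠ 0 ∧ ∃ φ : MilnorRing (W8 n) ≃ₐ[ℂ] MilnorRing (V8 n),
      φ (mkQ (W8 n) (X 0)) = -(c ^ n / 2) • mkQ (V8 n) (X 1 ^ n) ∧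
      φ (mkQ (W8 n) (X 1)) = c • mkQ (V8 n) (X 1) ∧
      PreservesGrading ⇑φ (q8 n) (q8 n) ∧ PreservesPairings ⇑φ (q8 n) (q8 n)) := by
  obtain ⟨m, rfl⟩ : ∃ m, n = m + 2 := ⟨n - 2, by omega⟩
  have hε : 2*(1:ℂ) - 1/2 ≠ 0 := by norm_num
  have hδ : 2*(0:ℂ) - 1/2 ≠ 0 := by norm_num
  rw [LG8.W8_eq, LG8.V8_eq]
  refine ⟨LG8.quasi m 1, LG8.quasi m 0,
    ⟨LG8.indep m 1 hε _ (by omega), LG8.spans m 1 hε _ (by omega)⟩,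
    ⟨LG8.indep m 0 hδ _ (by omega), LG8.spans m 0 hδ _ (by omega)⟩, ?_, ?_⟩
  · intro c hc
    exact ⟨LG8.phiE m 1 0 hε hδ c hc, (LG8.phiE_X m 1 0 hε hδ c hc).1,
      (LG8.phiE_X m 1 0 hε hδ c hc).2, LG8.pres_grading m 1 0 hε hδ c hc⟩
  · obtain ⟨c, h⟩ := IsAlgClosed.exists_pow_nat_eq (-1/3 : ℂ) (n := 2*m+2) (by omega)
    have hc : c ≠ 0 := by
      rintro rfl
      rw [zero_pow (by omega)] at h
      norm_num at h
    exact ⟨c, hc, LG8.phiE m 1 0 hε hδ c hc, (LG8.phiE_X m 1 0 hε hδ c hc).1,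
      (LG8.phiE_X m 1 0 hε hδ c hc).2, LG8.pres_grading m 1 0 hε hδ c hc,
      LG8.pres_pair m 1 0 hε hδ c hc (by rw [h]; norm_num)⟩
end
end

section
/- Let W ∈ ℂ[x₁,…,xₙ] be nondegenerate and quasihomogeneous with weights (q₁,…,qₙ), where each qᵢ is a rational number with 0 < qᵢ < 1. Then the dimension of the Milnor ring as a ℂ-vector space is dim_ℂ Q_W = ∏_{i=1}^{n} (1/qᵢ − 1). -/
open MvPolynomial
open scoped TensorProduct

noncomputable section

open LG

namespace LGproof
open RingTheory.Sequence IsLocalRing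

lemma coset_avoid {R : Type*} [CommRing R] [Algebra ℂ R] (f : R) (J : Ideal R)
    (S : Set (Ideal R)) (hS : S.Finite)
    (h : ∀ P ∈ S, ¬ (f ∈ P ∧ J ≤ P)) : ∃ a ∈ J, ∀ P ∈ S, f + a ∉ P := by
  classical
  let J' : Submodule ℂ R := J.restrictScalars ℂ
  let T : ℂ × J' →ₗ[ℂ] R := LinearMap.coprod (LinearMap.toSpanSingleton ℂ R f) J'.subtype
  let s : Finset (Subspace ℂ (ℂ × J')) :=
    insert (LinearMap.ker (LinearMap.fst ℂ ℂ J'))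
      (hS.toFinset.image fun P => (P.restrictScalars ℂ).comap T)
  have hs : ⊤ ∉ s := by
    intro ht
    rcases Finset.mem_insert.1 ht with h1 | h1
    · have : ((1 : ℂ), (0 : J')) ∈ LinearMap.ker (LinearMap.fst ℂ ℂ J') := by
        rw [← h1]; trivial
      simp at this
    · obtain ⟨P, hP, h2⟩ := Finset.mem_image.1 h1
      refine h P (by simpa using hP) ⟨?_, fun a ha => ?_⟩
      · have : ((1 : ℂ), (0 : J')) ∈ (P.restrictScalars ℂ).comap T := by
          rw [h2]; trivial
        simpa [T] using this
      · have : ((0 : ℂ), (⟨a, ha⟩ : J')) ∈ (P.restrictScalars ℂ).comap T := by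
          rw [h2]; trivial
        simpa [T] using this
  have := Subspace.biUnion_ne_univ_of_top_notMem hs
  obtain ⟨⟨c, a⟩, hca⟩ := (Set.ne_univ_iff_exists_notMem _).1 this
  simp only [Set.mem_iUnion, not_exists] at hca
  have hc : c ≠ 0 := by
    intro hc
    exact hca _ (Finset.mem_insert_self _ _) (by simp [hc])
  refine ⟨c⁻¹ • (a : R), J'.smul_mem _ a.2, fun P hP hmem => ?_⟩
  refine hca ((P.restrictScalars ℂ).comap T)
    (Finset.mem_insert_of_mem (Finset.mem_image_of_mem _ (by simpa using hP))) ?_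
  have h3 : c • (f + c⁻¹ • (a : R)) ∈ P.restrictScalars ℂ :=
    (P.restrictScalars ℂ).smul_mem c hmem
  rw [smul_add, smul_inv_smul₀ hc] at h3
  simpa [T] using h3

lemma exchange {R : Type*} [CommRing R] [Algebra ℂ R] [IsLocalRing R] [IsNoetherianRing R] :
    ∀ (n : ℕ) (M : Type _) [AddCommGroup M] [Module R M] [Module.Finite R M]
    (xs fs : List R), xs.length = n → fs.length = n → 
    (∀ x ∈ xs, x ∈ maximalIdeal R) → (∀ x ∈ fs, x ∈ maximalIdeal R) →
    (∀ x ∈ xs, x ∈ (Ideal.ofList fs ⊔ Module.annihilator R M).radical) →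
    IsWeaklyRegular M xs → IsWeaklyRegular M fs := by
  intro n
  induction n with
  | zero =>
    intro M _ _ _ xs fs hx hf _ _ _ _
    rw [List.length_eq_zero_iff] at hf
    subst hf
    exact IsWeaklyRegular.nil R M
  | succ n ih =>
    intro M _ _ _ xs fs hx hf hxm hfm hrad hreg
    obtain ⟨f, fs, rfl⟩ := List.exists_cons_of_length_eq_add_one hf
    rcases List.eq_nil_or_concat xs with rfl | ⟨xs, x, rfl⟩
    · simp at hx
    simp only [List.concat_eq_append, List.length_append, List.length_cons, List.length_nil,
      add_left_inj, zero_add] at *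
    rw [isWeaklyRegular_append_iff, isWeaklyRegular_singleton_iff] at hreg
    obtain ⟨hreg1, hreg2⟩ := hreg
    set M' := M ⧸ (Ideal.ofList xs • ⊤ : Submodule R M) with hM'
    obtain ⟨a, ha, hav⟩ := coset_avoid f (Ideal.ofList fs) (associatedPrimes R M')
      (associatedPrimes.finite R M') (by
        rintro P hP ⟨h1, h2⟩
        have hPp : P.IsPrime := hP.isPrime
        have hann : Module.annihilator R M ≤ P := by
          refine le_trans ?_ (IsAssociatedPrime.annihilator_le hP)
          rw [Submodule.annihilator_top]
          exact LinearMap.annihilator_le_of_surjective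
            (Submodule.mkQ (Ideal.ofList xs • ⊤ : Submodule R M)) (Submodule.mkQ_surjective _)
        have hx1 : x ∈ P := by
          have := hrad x (by simp)
          refine (hPp.radical_le_iff.2 ?_) this
          rw [Ideal.ofList_cons]
          exact sup_le (sup_le ((Ideal.span_singleton_le_iff_mem _).2 h1) h2) hann
        have h3 : x ∈ ⋃ p ∈ associatedPrimes R M', (p : Set R) := by
          simp only [Set.mem_iUnion]
          exact ⟨P, hP, hx1⟩
        rw [biUnion_associatedPrimes_eq_compl_regular] at h3
        exact h3 hreg2)
    set g := f + a with hg
    have ham : a ∈ maximalIdeal R := by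
      refine (Ideal.span_le.2 ?_ : Ideal.ofList fs ≤ _) ha
      intro y hy
      exact hfm y (by simp only [List.mem_cons]; exact Or.inr hy)
    have hgm : g ∈ maximalIdeal R := add_mem (hfm f (by simp)) ham
    have hgreg : IsSMulRegular M' g := by
      by_contra hcon
      have h3 : g ∈ ⋃ p ∈ associatedPrimes R M', (p : Set R) := by
        rw [biUnion_associatedPrimes_eq_compl_regular]; exact hcon
      simp only [Set.mem_iUnion] at h3
      obtain ⟨P, hP, h4⟩ := h3
      exact hav P hP h4
    have h5 : IsWeaklyRegular M (xs ++ [g]) := by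
      rw [isWeaklyRegular_append_iff, isWeaklyRegular_singleton_iff]
      exact ⟨hreg1, hgreg⟩
    have h6 : IsWeaklyRegular M (g :: xs) := by
      refine isWeaklyRegular_of_perm_of_subset_maximalIdeal h5 
        (List.perm_append_singleton g xs) ?_
      intro r hr
      rcases List.mem_append.1 hr with hr | hr
      · exact hxm r (List.mem_append.2 (Or.inl hr))
      · rw [List.mem_singleton] at hr; rw [hr]; exact hgm
    rw [isWeaklyRegular_cons_iff] at h6
    have h7 := ih (QuotSMulTop g M) xs fs hx hf
      (fun r hr => hxm r (List.mem_append.2 (Or.inl hr)))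
      (fun r hr => hfm r (List.mem_cons_of_mem _ hr)) (by
        intro r hr
        refine Ideal.radical_mono ?_ (hrad r (List.mem_append.2 (Or.inl hr)))
        have hle : Module.annihilator R M ≤ Module.annihilator R (QuotSMulTop g M) :=
          LinearMap.annihilator_le_of_surjective (Submodule.mkQ _) (Submodule.mkQ_surjective _)
        rw [Ideal.ofList_cons]
        refine sup_le (sup_le ((Ideal.span_singleton_le_iff_mem _).2 ?_) le_sup_left)
          (hle.trans le_sup_right)
        have : f = -a + g := by rw [hg]; ring
        rw [this]
        refine Submodule.add_mem_sup (neg_mem ha) ?_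
        rw [Module.mem_annihilator]
        intro m
        obtain ⟨m, rfl⟩ := Submodule.mkQ_surjective _ m
        rw [← map_smul]
        simp only [Submodule.mkQ_apply, Submodule.Quotient.mk_eq_zero]
        exact Submodule.smul_mem_pointwise_smul m g ⊤ trivial) h6.2
    have h8 : IsWeaklyRegular M (g :: fs) := (isWeaklyRegular_cons_iff M g fs).2 ⟨h6.1, h7⟩
    have h9 : IsWeaklyRegular M (fs ++ [g]) := by
      refine isWeaklyRegular_of_perm_of_subset_maximalIdeal h8
        (List.perm_append_singleton g fs).symm ?_
      intro r hr
      rcases List.mem_cons.1 hr with rfl | hr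
      · exact hgm
      · exact hfm r (List.mem_cons_of_mem _ hr)
    have h10 : IsWeaklyRegular M (fs ++ [f]) := by
      rw [isWeaklyRegular_append_iff, isWeaklyRegular_singleton_iff] at h9 ⊢
      refine ⟨h9.1, ?_⟩
      have hfg : ∀ m : M ⧸ (Ideal.ofList fs • ⊤ : Submodule R M), g • m = f • m := by
        intro m
        obtain ⟨m, rfl⟩ := Submodule.mkQ_surjective _ m
        rw [hg, add_smul, ← map_smul _ a]
        have : (Submodule.mkQ (Ideal.ofList fs • ⊤ : Submodule R M)) (a • m) = 0 := by
          simp only [Submodule.mkQ_apply, Submodule.Quotient.mk_eq_zero]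
          exact Submodule.smul_mem_smul ha trivial
        rw [this, add_zero]
      intro u v huv
      apply h9.2
      simpa [hfg] using huv
    refine isWeaklyRegular_of_perm_of_subset_maximalIdeal h10
        (List.perm_append_singleton f fs) ?_
    intro r hr
    exact hfm r (by simpa [or_comm] using hr)

lemma smulReg_iff {R : Type*} [CommRing R] (I : Ideal R) (r : R) :
    IsSMulRegular (R ⧸ (I • ⊤ : Submodule R R)) r ↔ ∀ h, r * h ∈ I → h ∈ I := by
  rw [isSMulRegular_iff_right_eq_zero_of_smul]
  have hI : (I • ⊤ : Submodule R R) = I := by simp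
  constructor
  · intro H h hh
    have := H (Submodule.Quotient.mk h) (by
      rw [← Submodule.Quotient.mk_smul, Submodule.Quotient.mk_eq_zero, hI]; exact hh)
    rwa [Submodule.Quotient.mk_eq_zero, hI] at this
  · intro H x hx
    obtain ⟨x, rfl⟩ := Submodule.Quotient.mk_surjective _ x
    rw [← Submodule.Quotient.mk_smul, Submodule.Quotient.mk_eq_zero, hI] at hx
    rw [Submodule.Quotient.mk_eq_zero, hI]
    exact H x hx

/-- elementary regular sequence condition -/
def Reg {R : Type*} [CommRing R] (fs : List R) : Prop :=
  ∀ k (hk : k < fs.length), ∀ h, fs[k] * h ∈ Ideal.ofList (fs.take k) →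
    h ∈ Ideal.ofList (fs.take k)

lemma reg_iff {R : Type*} [CommRing R] (fs : List R) : IsWeaklyRegular R fs ↔ Reg fs := by
  rw [isWeaklyRegular_iff]
  simp only [smulReg_iff, Reg]

lemma X_reg (n : ℕ) : Reg (List.ofFn (fun i => X i : Fin n → MvPolynomial (Fin n) ℂ)) := by
  intro k hk h hh
  rw [List.length_ofFn] at hk
  have hset : Ideal.ofList ((List.ofFn (fun i => X i : Fin n → MvPolynomial (Fin n) ℂ)).take k)
      = Ideal.span (X '' {i : Fin n | i.1 < k}) := by
    unfold Ideal.ofList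
    congr 1
    ext p
    simp only [List.mem_take_iff_getElem, Set.mem_image, Set.mem_ofPred_eq, List.getElem_ofFn,
      List.length_ofFn]
    constructor
    · rintro ⟨i, hi, rfl⟩
      exact ⟨⟨i, by omega⟩, by simp; omega, rfl⟩
    · rintro ⟨i, hi, rfl⟩
      exact ⟨i, by omega, rfl⟩
  rw [hset, mem_ideal_span_X_image] at hh ⊢
  intro m hm
  simp only [List.getElem_ofFn] at hh
  obtain ⟨i, hi, hne⟩ := hh (m + Finsupp.single (⟨k, hk⟩ : Fin n) 1) (by
    rw [mem_support_iff] at hm ⊢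
    rw [mul_comm, coeff_mul_X]; exact hm)
  refine ⟨i, hi, ?_⟩
  have : (⟨k, hk⟩ : Fin n) ≠ i := by
    rintro rfl
    simp at hi
  simpa [Finsupp.single_apply, this] using hne

variable {n : ℕ} (w : Fin n → ℕ)

local notation "𝒜" => weightedHomogeneousSubmodule ℂ w

attribute [local instance] weightedGradedAlgebra

lemma decomp_eq (p : MvPolynomial (Fin n) ℂ) (m : ℕ) :
    (DirectSum.decompose (𝒜) p m : MvPolynomial (Fin n) ℂ) = weightedHomogeneousComponent w m p :=
  decompose'_apply ℂ w p m

lemma homog_of (fs : List (MvPolynomial (Fin n) ℂ)) 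
    (h : ∀ f ∈ fs, ∃ d, IsWeightedHomogeneous w f d) : 
    (Ideal.ofList fs).IsHomogeneous (𝒜) := by
  apply Ideal.homogeneous_span
  intro x hx
  obtain ⟨d, hd⟩ := h x hx
  exact ⟨d, hd⟩

lemma homog_cancel (hw : ∀ i, w i ≠ 0) (I : Ideal (MvPolynomial (Fin n) ℂ))
    (hI : I.IsHomogeneous (𝒜)) (f : MvPolynomial (Fin n) ℂ) (d : ℕ)
    (hf : IsWeightedHomogeneous w f d)
    (H : ∀ h, f * h ∈ I → ∃ s, constantCoeff s ≠ 0 ∧ s * h ∈ I) :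
    ∀ h, f * h ∈ I → h ∈ I := by
  intro h hh
  rw [← DirectSum.sum_support_decompose (𝒜) h]
  refine Ideal.sum_mem _ fun j _ => ?_
  have h1 : f * (DirectSum.decompose (𝒜) h j : MvPolynomial (Fin n) ℂ) ∈ I := by
    rw [← DirectSum.coe_decompose_mul_add_of_left_mem (𝒜) (i := d) (a := f) hf]
    exact hI _ hh
  obtain ⟨s, hs, h2⟩ := H _ h1
  have h3 := hI (0 + j) h2
  rw [DirectSum.coe_decompose_mul_add_of_right_mem (𝒜) (SetLike.coe_mem _), decomp_eq w s,
    weightedHomogeneousComponent_zero s hw] at h3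
  have h4 := I.mul_mem_left (C (coeff 0 s)⁻¹) h3
  rw [← mul_assoc, ← C_mul, inv_mul_cancel₀ (by simpa [constantCoeff_eq] using hs), C_1,
    one_mul] at h4
  exact h4


lemma main_reg (hw : ∀ i, w i ≠ 0) (fs : List (MvPolynomial (Fin n) ℂ)) (hlen : fs.length = n)
    (hfs : ∀ f ∈ fs, ∃ d, 0 < d ∧ IsWeightedHomogeneous w f d)
    (hrad : ∀ i, X i ∈ (Ideal.ofList fs).radical) : Reg fs := by
  let 𝔪 : Ideal (MvPolynomial (Fin n) ℂ) := RingHom.ker constantCoeff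
  have hp : 𝔪.IsPrime := RingHom.ker_isPrime _
  let R := Localization.AtPrime 𝔪
  let φ := algebraMap (MvPolynomial (Fin n) ℂ) R
  have hmax : ∀ p ∈ 𝔪, φ p ∈ maximalIdeal R := fun p hp' =>
    (IsLocalization.AtPrime.to_map_mem_maximal_iff R 𝔪 p).2 hp'
  let xs := List.ofFn (fun i => X i : Fin n → MvPolynomial (Fin n) ℂ)
  have hx : IsWeaklyRegular R (xs.map φ) :=
    IsWeaklyRegular.of_isLocalization R 𝔪.primeCompl ((reg_iff _).2 (X_reg n))
  have hfm : ∀ f ∈ fs, f ∈ 𝔪 := by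
    intro f hf
    obtain ⟨d, hd, hh⟩ := hfs f hf
    rw [RingHom.mem_ker, constantCoeff_eq]
    exact hh.coeff_eq_zero 0 (by simpa using hd.ne)
  have key : IsWeaklyRegular R (fs.map φ) := by
    refine exchange n R (xs.map φ) (fs.map φ) (by simp [xs]) (by simpa using hlen) ?_ ?_ ?_ hx
    · intro x hx
      obtain ⟨y, hy, rfl⟩ := List.mem_map.1 hx
      obtain ⟨i, rfl⟩ := (List.mem_ofFn' _ _).1 hy
      exact hmax _ (by simp [𝔪])
    · intro x hx
      obtain ⟨y, hy, rfl⟩ := List.mem_map.1 hx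
      exact hmax _ (hfm y hy)
    · intro x hx
      obtain ⟨y, hy, rfl⟩ := List.mem_map.1 hx
      obtain ⟨i, rfl⟩ := (List.mem_ofFn' _ _).1 hy
      obtain ⟨N, hN⟩ := hrad i
      refine ⟨N, Ideal.mem_sup_left ?_⟩
      rw [← Ideal.map_ofList, ← map_pow]
      exact Ideal.mem_map_of_mem _ hN
  rw [reg_iff] at key
  intro k hk
  obtain ⟨d, _, hd⟩ := hfs fs[k] (List.getElem_mem hk)
  refine homog_cancel w hw _ (homog_of w _ ?_) _ d hd ?_
  · intro f hf
    obtain ⟨d, _, hd⟩ := hfs f (List.mem_of_mem_take hf)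
    exact ⟨d, hd⟩
  · intro h hh
    have h1 := key k (by simpa using hk) (φ h) (by
      rw [List.getElem_map, ← map_mul, ← List.map_take, ← Ideal.map_ofList]
      exact Ideal.mem_map_of_mem _ hh)
    rw [← List.map_take, ← Ideal.map_ofList,
      IsLocalization.algebraMap_mem_map_algebraMap_iff 𝔪.primeCompl] at h1
    obtain ⟨s, hs, h2⟩ := h1
    exact ⟨s, hs, h2⟩



/-- the degree `m` part of an ideal, inside the degree `m` polynomials -/
def part (I : Ideal (MvPolynomial (Fin n) ℂ)) (m : ℕ) :
    Submodule ℂ (weightedHomogeneousSubmodule ℂ w m) :=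
  (I.restrictScalars ℂ).comap (weightedHomogeneousSubmodule ℂ w m).subtype

lemma mem_part (I : Ideal (MvPolynomial (Fin n) ℂ)) (m : ℕ)
    (x : weightedHomogeneousSubmodule ℂ w m) :
    x ∈ part w I m ↔ (x : MvPolynomial (Fin n) ℂ) ∈ I := Iff.rfl

/-- Hilbert function -/
def hfun (I : Ideal (MvPolynomial (Fin n) ℂ)) (m : ℕ) : ℕ :=
  Module.finrank ℂ (weightedHomogeneousSubmodule ℂ w m ⧸ part w I m)

/-- Hilbert series -/
def HS (I : Ideal (MvPolynomial (Fin n) ℂ)) : PowerSeries ℤ :=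
  PowerSeries.mk fun m => (hfun w I m : ℤ)

lemma comp_mem {I : Ideal (MvPolynomial (Fin n) ℂ)} (hI : I.IsHomogeneous (𝒜))
    {p : MvPolynomial (Fin n) ℂ} (hp : p ∈ I) (m : ℕ) :
    weightedHomogeneousComponent w m p ∈ I := by
  rw [← decomp_eq]; exact hI m hp

lemma hfun_lt (I : Ideal (MvPolynomial (Fin n) ℂ))
    (hI : I.IsHomogeneous (𝒜)) (f : MvPolynomial (Fin n) ℂ) (d : ℕ)
    (hf : IsWeightedHomogeneous w f d) (m : ℕ) (hm : m < d) :
    hfun w (I ⊔ Ideal.span {f}) m = hfun w I m := by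
  have : part w (I ⊔ Ideal.span {f}) m = part w I m := by
    ext x
    simp only [mem_part]
    refine ⟨fun hx => ?_, fun hx => Ideal.mem_sup_left hx⟩
    obtain ⟨a, ha, b, hb, hab⟩ := Submodule.mem_sup.1 hx
    obtain ⟨c, rfl⟩ := Ideal.mem_span_singleton'.1 hb
    rw [← weightedHomogeneousComponent_eq_self x.2, ← hab, map_add]
    refine add_mem (comp_mem w hI ha m) ?_
    rw [← decomp_eq, DirectSum.coe_decompose_mul_of_right_mem_of_not_le (𝒜) hf (by omega)]
    exact zero_mem _
  unfold hfun
  rw [this]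

lemma hfun_add (hw : ∀ i, w i ≠ 0) (I : Ideal (MvPolynomial (Fin n) ℂ))
    (hI : I.IsHomogeneous (𝒜)) (f : MvPolynomial (Fin n) ℂ) (d : ℕ)
    (hf : IsWeightedHomogeneous w f d) (H : ∀ h, f * h ∈ I → h ∈ I) (j : ℕ) :
    hfun w (I ⊔ Ideal.span {f}) (j + d) + hfun w I j = hfun w I (j + d) := by
  have fin : Module.Finite ℂ (𝒜 (j + d)) :=
    Module.Finite.iff_fg.2 (weightedHomogeneousSubmodule_fg ℂ w hw _)
  let μ : 𝒜 j →ₗ[ℂ] 𝒜 (j + d) :=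
    ((LinearMap.mulRight ℂ f).comp (𝒜 j).subtype).codRestrict (𝒜 (j + d))
      (fun a => IsWeightedHomogeneous.mul a.2 hf)
  have hμ : ∀ a, (μ a : MvPolynomial (Fin n) ℂ) = a * f := fun a => rfl
  let T : 𝒜 j →ₗ[ℂ] (𝒜 (j + d) ⧸ part w I (j + d)) := (part w I (j + d)).mkQ.comp μ
  have hker : LinearMap.ker T = part w I j := by
    ext a
    simp only [LinearMap.mem_ker, T, LinearMap.comp_apply, Submodule.mkQ_apply,
      Submodule.Quotient.mk_eq_zero, mem_part, hμ]
    exact ⟨fun h => H _ (by rwa [mul_comm]), fun h => I.mul_mem_right _ h⟩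
  have hle : part w I (j + d) ≤ part w (I ⊔ Ideal.span {f}) (j + d) :=
    fun x hx => Ideal.mem_sup_left hx
  have hrange : LinearMap.range T =
      (part w (I ⊔ Ideal.span {f}) (j + d)).map (part w I (j + d)).mkQ := by
    apply le_antisymm
    · rintro _ ⟨a, rfl⟩
      refine ⟨μ a, ?_, rfl⟩
      show (μ a : MvPolynomial (Fin n) ℂ) ∈ I ⊔ Ideal.span {f}
      rw [hμ]
      exact Ideal.mem_sup_right (Ideal.mul_mem_left _ _ (Ideal.mem_span_singleton_self f))
    · rintro _ ⟨x, hx, rfl⟩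
      obtain ⟨a, ha, b, hb, hab⟩ := Submodule.mem_sup.1 hx
      obtain ⟨c, rfl⟩ := Ideal.mem_span_singleton'.1 hb
      refine ⟨⟨weightedHomogeneousComponent w j c, weightedHomogeneousComponent_mem w c j⟩, ?_⟩
      simp only [T, LinearMap.comp_apply, Submodule.mkQ_apply]
      rw [Submodule.Quotient.eq, mem_part]
      simp only [Submodule.coe_sub, hμ]
      rw [← weightedHomogeneousComponent_eq_self x.2]
      have h1 := congrArg (weightedHomogeneousComponent w (j + d)) hab
      rw [map_add, ← decomp_eq w (c * f),
        DirectSum.coe_decompose_mul_add_of_right_mem (𝒜) (i := j) (b := f) hf, decomp_eq] at h1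
      simp only [Submodule.subtype_apply] at h1
      rw [← h1]
      have := comp_mem w hI ha (j + d)
      simpa using this
  have e1 := (LinearMap.quotKerEquivRange T).finrank_eq
  rw [hker, hrange] at e1
  have e2 := (Submodule.quotientQuotientEquivQuotient _ _ hle).finrank_eq
  have e3 := Submodule.finrank_quotient_add_finrank
    ((part w (I ⊔ Ideal.span {f}) (j + d)).map (part w I (j + d)).mkQ)
  unfold hfun
  rw [← e2, e1, e3]

lemma HS_step (hw : ∀ i, w i ≠ 0) (I : Ideal (MvPolynomial (Fin n) ℂ))
    (hI : I.IsHomogeneous (𝒜)) (f : MvPolynomial (Fin n) ℂ) (d : ℕ)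
    (hf : IsWeightedHomogeneous w f d) (H : ∀ h, f * h ∈ I → h ∈ I) :
    HS w (I ⊔ Ideal.span {f}) = (1 - PowerSeries.X ^ d) * HS w I := by
  ext m
  rw [sub_mul, one_mul, map_sub, PowerSeries.coeff_X_pow_mul']
  simp only [HS, PowerSeries.coeff_mk]
  split_ifs with h
  · obtain ⟨j, rfl⟩ := Nat.exists_eq_add_of_le' h
    rw [← hfun_add w hw I hI f d hf H j]
    simp
  · rw [hfun_lt w I hI f d hf m (by omega), sub_zero]

lemma HS_list (hw : ∀ i, w i ≠ 0) (fs : List (MvPolynomial (Fin n) ℂ)) (d : ℕ → ℕ)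
    (hd : ∀ k (hk : k < fs.length), IsWeightedHomogeneous w fs[k] (d k)) (hreg : Reg fs) :
    ∀ k ≤ fs.length, HS w (Ideal.ofList (fs.take k)) =
      (∏ i ∈ Finset.range k, (1 - PowerSeries.X ^ (d i))) * HS w ⊥ := by
  intro k
  induction k with
  | zero => simp
  | succ k ih =>
    intro hk
    rw [List.take_succ_eq_append_getElem hk, Ideal.ofList_append, Ideal.ofList_singleton,
      HS_step w hw _ (homog_of w _ ?_) _ (d k) (hd k hk) (hreg k hk), ih (by omega),
      Finset.prod_range_succ]
    · ring
    · intro f hf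
      obtain ⟨i, hi, rfl⟩ := List.mem_take_iff_getElem.1 hf
      exact ⟨d i, hd i (by omega)⟩

lemma HS_fn (hw : ∀ i, w i ≠ 0) (f : Fin n → (MvPolynomial (Fin n) ℂ)) (d : Fin n → ℕ)
    (hd : ∀ k, IsWeightedHomogeneous w (f k) (d k)) (hreg : Reg (List.ofFn f)) :
    HS w (Ideal.span (Set.range f)) = (∏ i, (1 - PowerSeries.X ^ (d i))) * HS w ⊥ := by
  have := HS_list w hw (List.ofFn f) (fun k => if h : k < n then d ⟨k, h⟩ else 0) (by
    intro k hk
    rw [List.length_ofFn] at hk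
    simp only [List.getElem_ofFn, hk, dif_pos]
    exact hd _) hreg n (by simp)
  rw [List.take_of_length_le (by simp), Finset.prod_range] at this
  simp only [Fin.is_lt, dif_pos, Fin.eta] at this
  rw [← this]
  congr 1
  unfold Ideal.ofList
  congr 1
  ext x
  simp [List.mem_ofFn']

lemma hfun_eq_zero (I : Ideal (MvPolynomial (Fin n) ℂ)) (m : ℕ)
    (h : ∀ x ∈ 𝒜 m, x ∈ I) : hfun w I m = 0 := by
  have : part w I m = ⊤ := by
    ext x; simp [mem_part, h x.1 x.2]
  unfold hfun
  rw [this]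
  exact Module.finrank_zero_of_subsingleton

lemma HS_X :
    HS w (Ideal.span (Set.range (X : Fin n → MvPolynomial (Fin n) ℂ))) = 1 := by
  have hmem : ∀ p : MvPolynomial (Fin n) ℂ, p ∈ Ideal.span (Set.range X) ↔ coeff 0 p = 0 := by
    intro p
    rw [← Set.image_univ, mem_ideal_span_X_image]
    constructor
    · intro h
      by_contra h0
      obtain ⟨i, _, hi⟩ := h 0 (by simpa [mem_support_iff] using h0)
      simp at hi
    · intro h m hm
      by_contra hcon
      push Not at hcon
      have : m = 0 := by ext i; exact hcon i trivial
      subst this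
      exact (mem_support_iff.1 hm) h
  ext m
  rw [PowerSeries.coeff_one]
  simp only [HS, PowerSeries.coeff_mk]
  split_ifs with h
  · subst h
    norm_cast
    unfold hfun
    let c : 𝒜 0 →ₗ[ℂ] ℂ := (lcoeff ℂ 0).comp (𝒜 0).subtype
    have hk : LinearMap.ker c = part w (Ideal.span (Set.range X)) 0 := by
      ext x
      rw [mem_part, hmem]; rfl
    have hs : Function.Surjective c := fun z =>
      ⟨⟨C z, isWeightedHomogeneous_C w z⟩, by simp [c]⟩
    rw [← hk, (c.quotKerEquivOfSurjective hs).finrank_eq]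
    simp
  · norm_cast
    apply hfun_eq_zero
    intro x hx
    rw [hmem]
    exact IsWeightedHomogeneous.coeff_eq_zero hx 0 (by simpa using Ne.symm h)

lemma finrank_quot_pi {V : Type*} [AddCommGroup V] [Module ℂ V] {N : ℕ} (Q : Fin N → Type*)
    [∀ m, AddCommGroup (Q m)] [∀ m, Module ℂ (Q m)] [∀ m, Module.Finite ℂ (Q m)]
    (T : ∀ m, V →ₗ[ℂ] Q m) (K : Submodule ℂ V) (hker : ∀ p, p ∈ K ↔ ∀ m, T m p = 0)
    (hsurj : ∀ y : (∀ m, Q m), ∃ p, ∀ m, T m p = y m) :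
    Module.finrank ℂ (V ⧸ K) = ∑ m, Module.finrank ℂ (Q m) := by
  have hk : LinearMap.ker (LinearMap.pi T) = K := by
    ext p
    rw [hker, LinearMap.mem_ker]
    exact ⟨fun h m => congrFun h m, fun h => funext h⟩
  have hs : Function.Surjective (LinearMap.pi T) := fun y => by
    obtain ⟨p, hp⟩ := hsurj y
    exact ⟨p, funext hp⟩
  rw [← hk, ← Module.finrank_pi_fintype]
  exact LinearEquiv.finrank_eq (LinearMap.quotKerEquivOfSurjective _ hs)

lemma finrank_eq_sum (hw : ∀ i, w i ≠ 0) (I : Ideal (MvPolynomial (Fin n) ℂ))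
    (hI : I.IsHomogeneous (𝒜)) (N : ℕ) (hN : ∀ m ≥ N, ∀ x ∈ 𝒜 m, x ∈ I) :
    Module.finrank ℂ (MvPolynomial (Fin n) ℂ ⧸ I) = ∑ m ∈ Finset.range N, hfun w I m := by
  have fin : ∀ m, Module.Finite ℂ (𝒜 m) := fun m =>
    Module.Finite.iff_fg.2 (weightedHomogeneousSubmodule_fg ℂ w hw _)
  rw [Finset.sum_range]
  refine finrank_quot_pi (fun m : Fin N => 𝒜 m ⧸ part w I m)
    (fun m => (part w I m).mkQ.comp
      ((weightedHomogeneousComponent w m.1).codRestrict (𝒜 m)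
        (fun p => weightedHomogeneousComponent_mem w p m))) (I.restrictScalars ℂ) ?_ ?_
  · intro p
    rw [Submodule.restrictScalars_mem]
    simp only [LinearMap.comp_apply, Submodule.mkQ_apply, Submodule.Quotient.mk_eq_zero, mem_part,
      LinearMap.codRestrict_apply]
    constructor
    · intro h m
      exact comp_mem w hI h m
    · intro h
      rw [← DirectSum.sum_support_decompose (𝒜) p]
      refine Ideal.sum_mem _ fun j _ => ?_
      by_cases hj : j < N
      · rw [decomp_eq]; exact h ⟨j, hj⟩
      · exact hN j (by omega) _ (SetLike.coe_mem _)
  · intro y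
    choose z hz using fun m => Submodule.Quotient.mk_surjective _ (y m)
    refine ⟨∑ m, (z m : MvPolynomial (Fin n) ℂ), ?_⟩
    intro m
    rw [← hz m]
    simp only [LinearMap.comp_apply, Submodule.mkQ_apply]
    congr 1
    ext1
    rw [LinearMap.codRestrict_apply, map_sum, Finset.sum_eq_single m]
    · exact weightedHomogeneousComponent_eq_self (z m).2
    · intro b _ hb
      exact IsWeightedHomogeneous.weightedHomogeneousComponent_ne _ (z b).2
        (fun h => hb (Fin.ext h.symm))
    · simp

lemma cutoff (I : Ideal (MvPolynomial (Fin n) ℂ)) (hrad : ∀ i, X i ∈ I.radical) :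
    ∃ N, ∀ m ≥ N, ∀ x ∈ 𝒜 m, x ∈ I := by
  choose e he using hrad
  refine ⟨∑ i, e i * w i + 1, fun m hm x hx => ?_⟩
  rw [x.as_sum]
  refine Ideal.sum_mem _ fun a ha => ?_
  have hwt := hx (mem_support_iff.1 ha)
  obtain ⟨i, hi⟩ : ∃ i, e i ≤ a i := by
    by_contra hcon
    push Not at hcon
    have : Finsupp.weight w a ≤ ∑ i, e i * w i := by
      rw [Finsupp.weight_apply, Finsupp.sum_fintype _ _ (by simp)]
      refine Finset.sum_le_sum fun i _ => ?_
      rw [smul_eq_mul]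
      exact Nat.mul_le_mul_right _ (hcon i).le
    omega
  have : monomial a (coeff a x) = monomial (a - Finsupp.single i (e i)) (coeff a x) * X i ^ e i := by
    rw [X_pow_eq_monomial, monomial_mul, mul_one, tsub_add_cancel_of_le]
    simpa using hi
  rw [this]
  exact I.mul_mem_left _ (he i)

theorem bezout (hw : ∀ i, w i ≠ 0) (f : Fin n → (MvPolynomial (Fin n) ℂ)) (d : Fin n → ℕ)
    (hd0 : ∀ k, 0 < d k)
    (hd : ∀ k, IsWeightedHomogeneous w (f k) (d k))
    (hrad : ∀ i, X i ∈ (Ideal.span (Set.range f)).radical) :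
    Module.finrank ℂ (MvPolynomial (Fin n) ℂ ⧸ Ideal.span (Set.range f)) * ∏ i, w i = ∏ i, d i := by
  set I := Ideal.span (Set.range f) with hIdef
  have hIl : Ideal.ofList (List.ofFn f) = I := by
    unfold Ideal.ofList
    congr 1
    ext x
    simp [List.mem_ofFn']
  have hreg : Reg (List.ofFn f) := by
    refine main_reg w hw _ (by simp) ?_ (by rwa [hIl])
    intro g hg
    obtain ⟨i, rfl⟩ := (List.mem_ofFn' _ _).1 hg
    exact ⟨d i, hd0 i, hd i⟩
  have h1 := HS_fn w hw f d hd hreg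
  have h2 := HS_fn w hw X w (fun i => isWeightedHomogeneous_X ℂ w i) (X_reg n)
  rw [HS_X w] at h2
  have hI : I.IsHomogeneous (𝒜) := by
    apply Ideal.homogeneous_span
    rintro _ ⟨i, rfl⟩
    exact ⟨d i, hd i⟩
  obtain ⟨N, hN⟩ := cutoff w I hrad
  rw [finrank_eq_sum w hw I hI N hN]
  let P : Polynomial ℤ := ∑ m ∈ Finset.range N, Polynomial.monomial m (hfun w I m : ℤ)
  have hP : (P : PowerSeries ℤ) = HS w I := by
    ext m
    rw [Polynomial.coeff_coe]
    simp only [P, Polynomial.finsetSum_coeff, Polynomial.coeff_monomial, HS, PowerSeries.coeff_mk]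
    rw [Finset.sum_ite_eq']
    split_ifs with h
    · rfl
    · rw [hfun_eq_zero w I m (hN m (by simpa using h))]; rfl
  have h3 : P * ∏ i, (1 - Polynomial.X ^ w i) = ∏ i, (1 - Polynomial.X ^ d i) := by
    apply Polynomial.coe_injective
    have c1 : ∀ v : Fin n → ℕ, ((∏ i, (1 - Polynomial.X ^ v i) : Polynomial ℤ) : PowerSeries ℤ)
        = ∏ i, (1 - PowerSeries.X ^ v i) := by
      intro v
      rw [← Polynomial.coeToPowerSeries.ringHom_apply, map_prod]
      simp
    rw [Polynomial.coe_mul, c1, c1, hP, h1, mul_assoc, mul_comm (HS w ⊥), ← h2, mul_one]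
  have h4 : P * ∏ i, (∑ j ∈ Finset.range (w i), Polynomial.X ^ j)
      = ∏ i, (∑ j ∈ Finset.range (d i), Polynomial.X ^ j) := by
    have c2 : ∀ v : Fin n → ℕ, (∏ i, (1 - Polynomial.X ^ v i) : Polynomial ℤ) =
        (∏ i, (∑ j ∈ Finset.range (v i), Polynomial.X ^ j)) * (1 - Polynomial.X) ^ n := by
      intro v
      have : ∀ i, (1 - Polynomial.X ^ v i : Polynomial ℤ) =
        (∑ j ∈ Finset.range (v i), Polynomial.X ^ j) * (1 - Polynomial.X) := fun i =>
          (geom_sum_mul_neg _ _).symm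
      simp only [this, Finset.prod_mul_distrib, Finset.prod_const, Finset.card_univ,
        Fintype.card_fin]
    rw [c2, c2, ← mul_assoc] at h3
    refine mul_right_cancel₀ (pow_ne_zero n ?_) h3
    intro h0
    have := congrArg (Polynomial.eval 0) h0
    simp at this
  have h5 := congrArg (Polynomial.eval 1) h4
  simp only [Polynomial.eval_mul, Polynomial.eval_prod, Polynomial.eval_finsetSum,
    Polynomial.eval_pow, Polynomial.eval_X, one_pow, Finset.sum_const, Finset.card_range, P,
    Polynomial.eval_monomial, mul_one, nsmul_eq_mul] at h5
  exact_mod_cast h5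

end LGproof

/-- the dimension of the Milnor ring of a nondegenerate
quasihomogeneous polynomial with weights `qᵢ ∈ (0,1)` is `∏ᵢ (1/qᵢ - 1)`. -/
theorem milnorRing_finrank {n : ℕ}
    (W : MvPolynomial (Fin n) ℂ) (q : Fin n → ℚ)
    (hq : ∀ i, 0 < q i ∧ q i < 1)
    (hnd : Nondegenerate W) (hqh : IsQuasiHomogeneous W q) :
    (Module.finrank ℂ (MilnorRing W) : ℚ) = ∏ i, (1 / q i - 1) := by
  classical
  have hNpos : 0 < ∏ i, (q i).den := Finset.prod_pos fun i _ => (q i).den_pos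
  obtain ⟨N, hNdef⟩ : ∃ N, N = ∏ i, (q i).den := ⟨_, rfl⟩
  rw [← hNdef] at hNpos
  have hNQ : (0 : ℚ) < N := by exact_mod_cast hNpos
  have hex : ∀ i, ∃ m : ℕ, (m : ℚ) = N * q i := by
    intro i
    obtain ⟨c, hc⟩ : (q i).den ∣ N := hNdef ▸ Finset.dvd_prod_of_mem _ (Finset.mem_univ i)
    have h1 : ((q i).num.toNat : ℤ) = (q i).num :=
      Int.toNat_of_nonneg (Rat.num_nonneg.2 (hq i).1.le)
    have h1' : ((q i).num.toNat : ℚ) = ((q i).num : ℚ) := by exact_mod_cast h1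
    refine ⟨c * (q i).num.toNat, ?_⟩
    rw [hc]
    push_cast
    rw [h1', ← Rat.mul_den_eq_num (q i)]
    ring
  choose w hw using hex
  have hw0 : ∀ i, w i ≠ 0 := by
    intro i h
    have h2 := hw i
    rw [h] at h2
    have h3 := mul_pos hNQ (hq i).1
    simp only [Nat.cast_zero] at h2
    linarith
  have hwN : ∀ i, w i < N := by
    intro i
    have h3 : (w i : ℚ) < N := by
      rw [hw i]; nlinarith [(hq i).2]
    exact_mod_cast h3
  have hW : IsWeightedHomogeneous w W N := by
    intro a ha
    have h2 := hqh.2 a (mem_support_iff.2 ha)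
    rw [Finsupp.weight_apply, Finsupp.sum_fintype _ _ (by simp)]
    have : ((∑ i, a i • w i : ℕ) : ℚ) = N := by
      push_cast [smul_eq_mul]
      calc ∑ i, (a i : ℚ) * (w i : ℚ) = N * ∑ i, (a i : ℚ) * q i := by
            rw [Finset.mul_sum]
            refine Finset.sum_congr rfl fun i _ => ?_
            rw [hw i]; ring
        _ = N := by rw [h2, mul_one]
    exact_mod_cast this
  have hrad : ∀ i, (X i : MvPolynomial (Fin n) ℂ) ∈
      (Ideal.span (Set.range fun i => pderiv i W)).radical := by
    intro i
    rw [← vanishingIdeal_zeroLocus_eq_radical (K := ℂ), mem_vanishingIdeal_iff]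
    intro x hx
    rw [mem_zeroLocus_iff] at hx
    have hx0 : x = 0 := by
      apply hnd
      intro j
      have := hx _ (Ideal.subset_span ⟨j, rfl⟩)
      simpa [aeval_eq_eval] using this
    simp [hx0]
  have key := LGproof.bezout w hw0 (fun i => pderiv i W) (fun i => N - w i)
    (fun i => Nat.sub_pos_of_lt (hwN i))
    (fun i => hW.pderiv (Nat.sub_add_cancel (hwN i).le)) hrad
  have key2 : (Module.finrank ℂ (MilnorRing W) : ℚ) * ∏ i, (w i : ℚ) =
      ∏ i, ((N : ℚ) - w i) := by
    have h4 := congrArg (Nat.cast : ℕ → ℚ) key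
    push_cast at h4
    refine h4.trans (Finset.prod_congr rfl fun i _ => ?_)
    exact Nat.cast_sub (hwN i).le
  have hprod : (∏ i, (w i : ℚ)) ≠ 0 :=
    Finset.prod_ne_zero_iff.2 fun i _ => by exact_mod_cast hw0 i
  rw [← mul_left_inj' hprod, key2, ← Finset.prod_mul_distrib]
  refine Finset.prod_congr rfl fun i _ => ?_
  have := (hq i).1.ne'
  rw [hw i]
  field_simp
end
end
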